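/- For every ε > 0 there exists Δ₀ such that the following holds: if G is a finite simple graph with maximum degree Δ(G) ≥ Δ₀ and minimum degree δ(G) ≥ (ln Δ(G))^25, and L is a list assignment of E(G) such that |L(e)| ≥ (1+ε)·max{deg(u), deg(v)} for every edge e = uv, then there is an L-edge-colouring of G. -/

import Mathlib

/-- An `L`-edge-colouring of a simple graph `G`: a function `γ` on edges such that
`γ e ∈ L e` for every edge `e` and distinct edges sharing a vertex get distinct colours. -/
def IsLEdgeColouring {V : Type} (G : SimpleGraph V) (L : Sym2 V → Finset ℕ)
    (γ : Sym2 V → ℕ) : Prop :=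
  (∀ e ∈ G.edgeSet, γ e ∈ L e) ∧
  ∀ e ∈ G.edgeSet, ∀ f ∈ G.edgeSet, e ≠ f → (∃ v, v ∈ e ∧ v ∈ f) → γ e ≠ γ f

/-!
The proof is a semi-random (nibble) argument in a bounded number `k` of rounds. Split the edges
at random into `k` batches and treat one batch per round: every edge of the batch picks a uniformly
random colour from what is left of its list, and a colour picked by an edge is removed at both of
its ends. Additional coin flips remove further colours, so that every colour survives at every
vertex with the same probability `1 - β`. The lists therefore shrink by the factor `(1 - β) ^ 2`
but the numbers of edges at a vertex which compete for a colour only by `1 - β` from round to round.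
Since the lists are larger than the degrees by a constant factor, they stay larger than the
competing degrees by a constant factor during all rounds, while the edges that picked the colour of
an adjacent edge of the batch are only an `O(1 / k ^ 2)` fraction of the edges at each vertex. These
edges are put aside, and at the end they are coloured greedily.

In a round every relevant quantity is concentrated up to an error probability `exp (-c δ(G))`, by a
bounded difference inequality that takes variances into account, and depends on choices at bounded
distance only. As soon as `δ(G)` exceeds a large multiple of `log Δ(G)`, the local lemma provides an
outcome that is good everywhere at once.
-/

open MeasureTheory ProbabilityTheory Finset Function

/-! ### Product measures, concentration and the local lemma -/

section ProductSpace

variable {ι : Type*} [Fintype ι] {X : ι → Type*} [∀ i, MeasurableSpace (X i)]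
  (μ : ∀ i, Measure (X i)) [∀ i, IsProbabilityMeasure (μ i)]

theorem measurePreserving_piecewise [DecidableEq ι] (I : Finset ι) :
    MeasurePreserving (fun z : (∀ i, X i) × (∀ i, X i) => I.piecewise z.1 z.2)
      ((Measure.pi μ).prod (Measure.pi μ)) (Measure.pi μ) := by
  have hmeas : Measurable fun z : (∀ i, X i) × (∀ i, X i) => I.piecewise z.1 z.2 := by
    refine measurable_pi_iff.2 fun i => ?_
    by_cases hi : i ∈ I <;> simp only [hi, piecewise_eq_of_mem, piecewise_eq_of_notMem,
      not_false_eq_true] <;> fun_prop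
  refine ⟨hmeas, (Measure.pi_eq fun s hs => ?_).symm⟩
  have hpre :
      (fun z : (∀ i, X i) × (∀ i, X i) => I.piecewise z.1 z.2) ⁻¹' Set.univ.pi s =
        (Set.univ.pi (I.piecewise s fun _ => Set.univ)) ×ˢ
        (Set.univ.pi (I.piecewise (fun _ => Set.univ) s)) := by
    ext z
    simp only [Set.mem_preimage, Set.mem_univ_pi, Set.mem_prod, ← forall_and]
    refine forall_congr' fun i => ?_
    by_cases hi : i ∈ I <;> simp [hi]
  rw [Measure.map_apply hmeas (.univ_pi hs), hpre, Measure.prod_prod, Measure.pi_pi,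
    Measure.pi_pi, ← prod_mul_distrib]
  refine prod_congr rfl fun i _ => ?_
  by_cases hi : i ∈ I <;> simp [hi]

theorem measureReal_le_of_forall_piecewise_le [DecidableEq ι] {B : Set (∀ i, X i)}
    (hB : MeasurableSet B) (I : Finset ι) {c : ℝ}
    (h : ∀ a, (Measure.pi μ).real {b | I.piecewise a b ∈ B} ≤ c) :
    (Measure.pi μ).real B ≤ c := by
  have hc : 0 ≤ c := by
    obtain ⟨a⟩ := (Measure.pi μ).nonempty_of_neZero
    exact measureReal_nonneg.trans (h a)
  have hI := measurePreserving_piecewise μ I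
  have hslice (a) : (Measure.pi μ {b | I.piecewise a b ∈ B}) ≤ ENNReal.ofReal c :=
    (ENNReal.le_ofReal_iff_toReal_le (measure_ne_top _ _) hc).2 (h a)
  refine ENNReal.toReal_le_of_le_ofReal hc ?_
  rw [← hI.measure_preimage hB.nullMeasurableSet, Measure.prod_apply (hI.measurable hB)]
  exact (lintegral_mono hslice).trans_eq (by simp)

variable {μ}

theorem measureReal_inter_eq_mul_of_dependsOn {A B : Set (∀ i, X i)} (hA : MeasurableSet A)
    (hB : MeasurableSet B) {I J : Finset ι} (hAI : DependsOn (· ∈ A) I)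
    (hBJ : DependsOn (· ∈ B) J) (hIJ : Disjoint I J) :
    (Measure.pi μ).real (A ∩ B) = (Measure.pi μ).real A * (Measure.pi μ).real B := by
  classical
  have hpre : (fun z : (∀ i, X i) × (∀ i, X i) => I.piecewise z.1 z.2) ⁻¹' (A ∩ B) = A ×ˢ B := by
    ext z
    have h₁ : I.piecewise z.1 z.2 ∈ A ↔ z.1 ∈ A :=
      (hAI fun i hi => I.piecewise_eq_of_mem _ _ hi).to_iff
    have h₂ : I.piecewise z.1 z.2 ∈ B ↔ z.2 ∈ B :=
      (hBJ fun i hi => I.piecewise_eq_of_notMem _ _ (disjoint_right.1 hIJ hi)).to_iff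
    exact and_congr h₁ h₂
  rw [measureReal_def, ← (measurePreserving_piecewise μ I).measure_preimage
    (hA.inter hB).nullMeasurableSet, hpre, ← measureReal_def, measureReal_prod_prod]

theorem integral_eq_integral_integral_update [DecidableEq ι] [∀ i, Finite (X i)]
    [∀ i, MeasurableSingletonClass (X i)] (f : (∀ i, X i) → ℝ) (i : ι) :
    ∫ ω, f ω ∂Measure.pi μ = ∫ ω, ∫ y, f (update ω i y) ∂μ i ∂Measure.pi μ := by
  have hi := measurePreserving_piecewise μ ({i} : Finset ι)
  have hf : AEStronglyMeasurable f (Measure.pi μ) := (measurable_of_finite f).aestronglyMeasurable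
  calc ∫ ω, f ω ∂Measure.pi μ
      = ∫ z, f (piecewise {i} z.1 z.2) ∂(Measure.pi μ).prod (Measure.pi μ) := by
        rw [← integral_map hi.measurable.aemeasurable (hi.map_eq.symm ▸ hf), hi.map_eq]
    _ = ∫ ω, ∫ a, f (update ω i (a i)) ∂Measure.pi μ ∂Measure.pi μ := by
        rw [integral_prod_symm _ .of_finite]
        simp only [piecewise_singleton]
    _ = ∫ ω, ∫ y, f (update ω i y) ∂μ i ∂Measure.pi μ := by
        congr with ω
        rw [← (measurePreserving_eval μ i).map_eq, integral_map
          (measurable_pi_apply i).aemeasurable (measurable_of_finite _).aestronglyMeasurable]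

end ProductSpace

section Concentration

theorem abs_sub_integral_le {Y : Type*} [MeasurableSpace Y] {ν : Measure Y}
    [IsProbabilityMeasure ν] {g h : Y → ℝ} (hgi : Integrable g ν) (hhi : Integrable h ν)
    (hg : ∀ y y', |g y - g y'| ≤ h y + h y') (y : Y) :
    |g y - ∫ y', g y' ∂ν| ≤ h y + ∫ y', h y' ∂ν := by
  calc |g y - ∫ y', g y' ∂ν| = |∫ y', (g y - g y') ∂ν| := by
        rw [integral_sub (integrable_const _) hgi]; simp
    _ ≤ ∫ y', |g y - g y'| ∂ν := abs_integral_le_integral_abs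
    _ ≤ ∫ y', (h y + h y') ∂ν := integral_mono ((integrable_const _).sub hgi).abs
        ((integrable_const _).add hhi) (hg y)
    _ = h y + ∫ y', h y' ∂ν := by rw [integral_add (integrable_const _) hhi]; simp

theorem integral_exp_mul_le_of_abs_sub_le {Y : Type*} [Finite Y] [MeasurableSpace Y]
    [MeasurableSingletonClass Y] {ν : Measure Y} [IsProbabilityMeasure ν] {g h : Y → ℝ}
    {b l : ℝ} (hb : ∀ y, h y ≤ b) (hl : 0 ≤ l) (hbl : 2 * b * l ≤ 1)
    (hg : ∀ y y', |g y - g y'| ≤ h y + h y') :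
    ∫ y, Real.exp (l * g y) ∂ν ≤ Real.exp (l * ∫ y, g y ∂ν + 4 * l ^ 2 * ∫ y, h y ^ 2 ∂ν) := by
  set m := ∫ y, g y ∂ν
  set H := ∫ y, h y ∂ν
  have hHb : H ≤ b := by
    calc H ≤ ∫ _, b ∂ν := integral_mono .of_finite .of_finite hb
      _ = b := by simp
  have hHsq : H ^ 2 ≤ ∫ y, h y ^ 2 ∂ν := by
    have := variance_nonneg h ν
    rw [variance_eq_sub (MemLp.of_discrete)] at this
    simpa [H] using this
  have hpoint (y : Y) : Real.exp (l * (g y - m)) ≤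
      1 + l * (g y - m) + l ^ 2 * (2 * h y ^ 2 + 2 * H ^ 2) := by
    have habs : |l * (g y - m)| ≤ l * (h y + H) := by
      rw [abs_mul, abs_of_nonneg hl]; gcongr; exact abs_sub_integral_le .of_finite .of_finite hg y
    have hsmall : |l * (g y - m)| ≤ 1 :=
      habs.trans (le_trans (mul_le_mul_of_nonneg_left (by linarith [hb y]) hl)
        (show l * (2 * b) ≤ 1 by linarith))
    have hexp := (abs_le.1 (Real.abs_exp_sub_one_sub_id_le hsmall)).2
    have hsq : (l * (g y - m)) ^ 2 ≤ (l * (h y + H)) ^ 2 := by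
      rw [← sq_abs]; gcongr
    nlinarith [mul_nonneg (sq_nonneg l) (sq_nonneg (h y - H))]
  have hcentred : ∫ y, Real.exp (l * (g y - m)) ∂ν ≤ Real.exp (4 * l ^ 2 * ∫ y, h y ^ 2 ∂ν) := by
    calc ∫ y, Real.exp (l * (g y - m)) ∂ν
        ≤ ∫ y, (1 + l * (g y - m) + l ^ 2 * (2 * h y ^ 2 + 2 * H ^ 2)) ∂ν :=
          integral_mono .of_finite .of_finite hpoint
      _ = 1 + l ^ 2 * (2 * ∫ y, h y ^ 2 ∂ν + 2 * H ^ 2) := by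
          simp only [integral_add, integral_const_mul, integral_sub, Integrable.of_finite,
            integral_const, probReal_univ, one_smul, m, sub_self, mul_zero, add_zero]
      _ ≤ 4 * l ^ 2 * ∫ y, h y ^ 2 ∂ν + 1 := by nlinarith [sq_nonneg l]
      _ ≤ _ := Real.add_one_le_exp _
  calc ∫ y, Real.exp (l * g y) ∂ν = Real.exp (l * m) * ∫ y, Real.exp (l * (g y - m)) ∂ν := by
        rw [← integral_const_mul]
        simp only [← Real.exp_add]
        ring_nf
    _ ≤ Real.exp (l * m) * Real.exp (4 * l ^ 2 * ∫ y, h y ^ 2 ∂ν) := by gcongr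
    _ = _ := (Real.exp_add _ _).symm

variable {ι : Type*} [DecidableEq ι] {X : ι → Type*} [∀ i, Finite (X i)]
  [∀ i, MeasurableSpace (X i)] [∀ i, MeasurableSingletonClass (X i)] {μ : ∀ i, Measure (X i)}
  [∀ i, IsProbabilityMeasure (μ i)] {f : (∀ i, X i) → ℝ} {h : ∀ i, X i → ℝ}

theorem abs_integral_update_sub_le (hf : ∀ ω i y, |f (update ω i y) - f ω| ≤ h i (ω i) + h i y)
    (i j : ι) (ω : ∀ i, X i) (z : X j) :
    |∫ y, f (update (update ω j z) i y) ∂μ i - ∫ y, f (update ω i y) ∂μ i|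
      ≤ h j (ω j) + h j z := by
  rcases eq_or_ne j i with rfl | hji
  · simpa only [update_idem, sub_self, abs_zero] using (abs_nonneg _).trans (hf ω j z)
  · rw [← integral_sub .of_finite .of_finite]
    calc |∫ y, (f (update (update ω j z) i y) - f (update ω i y)) ∂μ i|
        ≤ ∫ y, |f (update (update ω j z) i y) - f (update ω i y)| ∂μ i :=
          abs_integral_le_integral_abs
      _ ≤ ∫ _, (h j (ω j) + h j z) ∂μ i := by
          refine integral_mono .of_finite .of_finite fun y => ?_
          simpa only [update_comm hji, update_of_ne hji] using hf (update ω i y) j z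
      _ = h j (ω j) + h j z := by simp

variable [Fintype ι]

theorem integral_exp_mul_le_of_dependsOn {b l : ℝ} (hb : ∀ i y, h i y ≤ b) (hl : 0 ≤ l)
    (hbl : 2 * b * l ≤ 1) (hf : ∀ ω i y, |f (update ω i y) - f ω| ≤ h i (ω i) + h i y)
    {s : Finset ι} (hs : DependsOn f s) :
    ∫ ω, Real.exp (l * f ω) ∂Measure.pi μ ≤
      Real.exp (l * ∫ ω, f ω ∂Measure.pi μ + 4 * l ^ 2 * ∑ i ∈ s, ∫ y, h i y ^ 2 ∂μ i) := by
  induction s using Finset.induction_on generalizing f with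
  | empty =>
    obtain ⟨ω₀⟩ := (Measure.pi μ).nonempty_of_neZero
    have hconst (ω) : f ω = f ω₀ := hs (by simp)
    simp [hconst]
  | insert i s hi ih =>
    set g : (∀ i, X i) → ℝ := fun ω => ∫ y, f (update ω i y) ∂μ i
    have hgs : DependsOn g s := fun ω ω' hω => integral_congr_ae <| .of_forall fun y =>
      hs fun j hj => by
        rcases eq_or_ne j i with rfl | hji
        · simp
        · simpa [hji] using hω j (mem_of_mem_insert_of_ne hj hji)
    have hcoord (ω) : ∫ y, Real.exp (l * f (update ω i y)) ∂μ i ≤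
        Real.exp (l * g ω) * Real.exp (4 * l ^ 2 * ∫ y, h i y ^ 2 ∂μ i) := by
      rw [← Real.exp_add]
      refine integral_exp_mul_le_of_abs_sub_le (hb i) hl hbl fun y y' => ?_
      simpa only [update_idem, update_self, add_comm] using hf (update ω i y') i y
    calc ∫ ω, Real.exp (l * f ω) ∂Measure.pi μ
        = ∫ ω, ∫ y, Real.exp (l * f (update ω i y)) ∂μ i ∂Measure.pi μ :=
          integral_eq_integral_integral_update _ i
      _ ≤ ∫ ω, Real.exp (l * g ω) * Real.exp (4 * l ^ 2 * ∫ y, h i y ^ 2 ∂μ i) ∂Measure.pi μ :=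
          integral_mono .of_finite .of_finite hcoord
      _ ≤ Real.exp (l * ∫ ω, g ω ∂Measure.pi μ + 4 * l ^ 2 * ∑ j ∈ s, ∫ y, h j y ^ 2 ∂μ j) *
            Real.exp (4 * l ^ 2 * ∫ y, h i y ^ 2 ∂μ i) := by
          rw [integral_mul_const]
          gcongr
          exact ih (fun ω j z => abs_integral_update_sub_le hf i j ω z) hgs
      _ = _ := by
          rw [← integral_eq_integral_integral_update f i, ← Real.exp_add, sum_insert hi]
          ring_nf

theorem measureReal_add_mul_le_le_exp {m N δ : ℝ} (hδ₀ : 0 ≤ δ) (hδ₁ : δ ≤ 1)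
    (hh : ∀ i y, h i y ≤ 2) (hf : ∀ ω i y, |f (update ω i y) - f ω| ≤ h i (ω i) + h i y)
    (hN : ∑ i, ∫ y, h i y ^ 2 ∂μ i ≤ 2 * N) (hm : ∫ ω, f ω ∂Measure.pi μ ≤ m) :
    (Measure.pi μ).real {ω | m + δ * N ≤ f ω} ≤ Real.exp (-δ ^ 2 * N / 32) := by
  have hmgf := integral_exp_mul_le_of_dependsOn (μ := μ) (l := δ / 16) hh (by positivity)
    (by linarith) hf (s := univ) (by simpa using dependsOn_univ f)
  calc (Measure.pi μ).real {ω | m + δ * N ≤ f ω}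
      ≤ Real.exp (-(δ / 16) * (m + δ * N)) * mgf f (Measure.pi μ) (δ / 16) :=
        measure_ge_le_exp_mul_mgf _ (by positivity) .of_finite
    _ ≤ Real.exp (-(δ / 16) * (m + δ * N)) * Real.exp (δ / 16 * ∫ ω, f ω ∂Measure.pi μ +
          4 * (δ / 16) ^ 2 * ∑ i, ∫ y, h i y ^ 2 ∂μ i) := by gcongr; exact hmgf
    _ ≤ Real.exp (-(δ / 16) * (m + δ * N)) *
          Real.exp (δ / 16 * m + 4 * (δ / 16) ^ 2 * (2 * N)) := by gcongr
    _ = Real.exp (-δ ^ 2 * N / 32) := by rw [← Real.exp_add]; ring_nf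

end Concentration

section LocalLemma

variable {Ω V : Type*} [MeasurableSpace Ω] {P : Measure Ω} [IsProbabilityMeasure P]

/-- The event that none of the bad events `B u` with `u ∈ T` occurs. -/
def avoid (B : V → Set Ω) (T : Finset V) : Set Ω := {ω | ∀ u ∈ T, ω ∉ B u}

variable {B : V → Set Ω} {q d : ℝ}

theorem measureReal_avoid_sdiff_le_two_mul [DecidableEq V] {T N : Finset V} (hq : 0 ≤ q)
    (hqd : 4 * q * d ≤ 1) (hN : #N ≤ d)
    (hB : ∀ u ∈ T ∩ N, P.real (B u ∩ avoid B (T \ N)) ≤ 2 * q * P.real (avoid B (T \ N))) :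
    P.real (avoid B (T \ N)) ≤ 2 * P.real (avoid B T) := by
  have hcover : avoid B (T \ N) ⊆ avoid B T ∪ ⋃ u ∈ T ∩ N, B u ∩ avoid B (T \ N) := by
    intro ω hω
    by_contra hcon
    simp only [Set.mem_union, Set.mem_iUnion, Set.mem_inter_iff, not_or, not_exists] at hcon
    exact hcon.1 fun u hu hBu =>
      (em (u ∈ N)).elim (fun huN => hcon.2 u (mem_inter.2 ⟨hu, huN⟩) ⟨hBu, hω⟩)
        fun huN => hω u (mem_sdiff.2 ⟨hu, huN⟩) hBu
  have hsum : ∑ u ∈ T ∩ N, P.real (B u ∩ avoid B (T \ N)) ≤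
      d * (2 * q * P.real (avoid B (T \ N))) :=
    calc ∑ u ∈ T ∩ N, P.real (B u ∩ avoid B (T \ N))
        ≤ #(T ∩ N) * (2 * q * P.real (avoid B (T \ N))) := by
          rw [← nsmul_eq_mul]; exact sum_le_card_nsmul _ _ _ hB
      _ ≤ _ := by
          gcongr
          exact (Nat.cast_le.2 (card_le_card inter_subset_right)).trans hN
  have hunion := (measureReal_mono (μ := P) hcover).trans <| (measureReal_union_le _ _).trans <|
    add_le_add_right (measureReal_biUnion_finset_le _ _) _
  nlinarith [measureReal_nonneg (μ := P) (s := avoid B (T \ N))]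

theorem measureReal_inter_avoid_le (N : V → Finset V) (hqd : 4 * q * d ≤ 1)
    (hN : ∀ v, #(N v) ≤ d)
    (hB : ∀ v T, Disjoint T (N v) → P.real (B v ∩ avoid B T) ≤ q * P.real (avoid B T))
    (T : Finset V) (v : V) : P.real (B v ∩ avoid B T) ≤ 2 * q * P.real (avoid B T) := by
  classical
  induction T using Finset.strongInduction generalizing v with
  | H T ih =>
    have hq : 0 ≤ q := by
      simpa [avoid] using measureReal_nonneg.trans (hB v ∅ (disjoint_empty_left _))
    have hsub (u) (hu : u ∈ T ∩ N v) : T \ N v ⊂ T :=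
      ⟨sdiff_subset, fun h => (mem_sdiff.1 (h (mem_inter.1 hu).1)).2 (mem_inter.1 hu).2⟩
    calc P.real (B v ∩ avoid B T)
        ≤ P.real (B v ∩ avoid B (T \ N v)) := measureReal_mono
          (Set.inter_subset_inter_right _ fun ω hω u hu => hω u (mem_sdiff.1 hu).1)
      _ ≤ q * P.real (avoid B (T \ N v)) := hB v _ sdiff_disjoint
      _ ≤ q * (2 * P.real (avoid B T)) := by
          gcongr
          exact measureReal_avoid_sdiff_le_two_mul hq hqd (hN v) fun u hu => ih _ (hsub u hu) u
      _ = 2 * q * P.real (avoid B T) := by ring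

/-- The symmetric lopsided Lovász local lemma. -/
theorem measureReal_avoid_pos (N : V → Finset V) (hd : 1 ≤ d) (hqd : 4 * q * d ≤ 1)
    (hN : ∀ v, #(N v) ≤ d)
    (hB : ∀ v T, Disjoint T (N v) → P.real (B v ∩ avoid B T) ≤ q * P.real (avoid B T))
    (T : Finset V) : 0 < P.real (avoid B T) := by
  classical
  induction T using Finset.induction_on with
  | empty => simp [avoid]
  | insert v T _ ih =>
    have hcover : avoid B T ⊆ (B v ∩ avoid B T) ∪ avoid B (insert v T) := by
      intro ω hω
      by_cases hv : ω ∈ B v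
      · exact .inl ⟨hv, hω⟩
      · exact .inr (forall_mem_insert .. |>.2 ⟨hv, hω⟩)
    have hle := (measureReal_mono (μ := P) hcover).trans (measureReal_union_le _ _)
    have hv := measureReal_inter_avoid_le N hqd hN hB T v
    have hq : 2 * q ≤ 1 / 2 := by nlinarith
    nlinarith only [hle, hv, hq, ih]

end LocalLemma

section ProductLocalLemma

variable {ι : Type*} [Fintype ι] {X : ι → Type*} [∀ i, MeasurableSpace (X i)]
  {μ : ∀ i, Measure (X i)} [∀ i, IsProbabilityMeasure (μ i)]

theorem exists_mem_forall_singleton_ne_zero [∀ i, Countable (X i)] {A : Set (∀ i, X i)}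
    (hA : 0 < (Measure.pi μ).real A) : ∃ ω ∈ A, ∀ i, μ i {ω i} ≠ 0 := by
  by_contra! hcon
  have hnull : Measure.pi μ A = 0 := by
    rw [← Set.biUnion_of_singleton A, measure_biUnion_null_iff A.to_countable]
    intro ω hω
    obtain ⟨i, hi⟩ := hcon ω hω
    rw [Measure.pi_singleton]
    exact prod_eq_zero (mem_univ i) hi
  simp [measureReal_def, hnull] at hA

theorem exists_forall_singleton_ne_zero_forall_notMem [∀ i, Countable (X i)]
    [∀ i, MeasurableSingletonClass (X i)] {V : Type*} [Finite V] {B : V → Set (∀ i, X i)}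
    {S : V → Finset ι} {q d : ℝ} (hBS : ∀ v, DependsOn (· ∈ B v) (S v))
    (hq : ∀ v, (Measure.pi μ).real (B v) ≤ q) (hd : 1 ≤ d) (N : V → Finset V)
    (hSN : ∀ v u, u ∉ N v → Disjoint (S v) (S u)) (hN : ∀ v, #(N v) ≤ d) (hqd : 4 * q * d ≤ 1) :
    ∃ ω, (∀ i, μ i {ω i} ≠ 0) ∧ ∀ v, ω ∉ B v := by
  classical
  cases nonempty_fintype V
  have hpos : 0 < (Measure.pi μ).real (avoid B univ) := by
    refine measureReal_avoid_pos N hd hqd hN (fun v T hT => ?_) univ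
    have hdep : DependsOn (· ∈ avoid B T) (T.biUnion S : Finset ι) := fun ω ω' hω =>
      propext <| forall₂_congr fun u hu => not_congr <| Eq.to_iff <| hBS u fun i hi =>
        hω i (mem_biUnion.2 ⟨u, hu, hi⟩)
    have hdisj : Disjoint (S v) (T.biUnion S) :=
      (disjoint_biUnion_right _ _ _).2 fun u hu => hSN v u (disjoint_left.1 hT hu)
    rw [measureReal_inter_eq_mul_of_dependsOn .of_discrete .of_discrete (hBS v) hdep hdisj]
    gcongr
    exact hq v
  obtain ⟨ω, hω, hω₀⟩ := exists_mem_forall_singleton_ne_zero hpos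
  exact ⟨ω, hω₀, fun v => hω v (mem_univ v)⟩

end ProductLocalLemma

/-! ### Numbers of hit targets -/

section Hits

open scoped Classical in
theorem integral_card_filter {Ω κ : Type*} [MeasurableSpace Ω] {P : Measure Ω}
    [IsFiniteMeasure P] (s : Finset κ) {p : κ → Ω → Prop} (hp : ∀ k, MeasurableSet {ω | p k ω}) :
    ∫ ω, (#{k ∈ s | p k ω} : ℝ) ∂P = ∑ k ∈ s, P.real {ω | p k ω} := by
  have hind (ω) : (#{k ∈ s | p k ω} : ℝ) = ∑ k ∈ s, {ω | p k ω}.indicator 1 ω := by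
    simp [Set.indicator_apply]
  simp only [hind]
  rw [integral_finsetSum _ fun k _ => (integrable_const 1).indicator (hp k)]
  exact sum_congr rfl fun k _ => integral_indicator_one (hp k)

variable {ι κ : Type*} {X : ι → Type*}

open scoped Classical in
/-- The number of targets `R k`, `k ∈ s`, hit by at least one coordinate of `ω`. -/
noncomputable def hitCount (s : Finset κ) (R : κ → ∀ i, Set (X i)) (ω : ∀ i, X i) : ℕ :=
  #{k ∈ s | ∃ i, ω i ∈ R k i}

open scoped Classical in
theorem hitCount_le_add (s : Finset κ) (R : κ → ∀ i, Set (X i)) (ω ω' : ∀ i, X i)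
    (i : ι) (hω : ∀ j ≠ i, ω j = ω' j) :
    hitCount s R ω ≤ hitCount s R ω' + #{k ∈ s | ω i ∈ R k i} := by
  refine (card_le_card fun k hk => ?_).trans (card_union_le _ _)
  simp only [mem_union, mem_filter] at hk ⊢
  obtain ⟨hks, j, hj⟩ := hk
  rcases eq_or_ne j i with rfl | hji
  · exact .inr ⟨hks, hj⟩
  · exact .inl ⟨hks, j, hω j hji ▸ hj⟩

variable [Fintype ι] [∀ i, MeasurableSpace (X i)] {μ : ∀ i, Measure (X i)}
  [∀ i, IsProbabilityMeasure (μ i)]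

theorem measureReal_setOf_forall_notMem [∀ i, DiscreteMeasurableSpace (X i)]
    (R : ∀ i, Set (X i)) :
    (Measure.pi μ).real {ω | ∀ i, ω i ∉ R i} = ∏ i, (1 - (μ i).real (R i)) := by
  have hpi : {ω : ∀ i, X i | ∀ i, ω i ∉ R i} = Set.univ.pi fun i => (R i)ᶜ := by ext; simp
  rw [hpi, measureReal_def, Measure.pi_pi, ENNReal.toReal_prod]
  exact prod_congr rfl fun i _ => probReal_compl_eq_one_sub .of_discrete

theorem measureReal_setOf_exists_mem_le [∀ i, DiscreteMeasurableSpace (X i)] (J : Finset ι)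
    (R : ∀ i, Set (X i)) :
    (Measure.pi μ).real {ω | ∃ i ∈ J, ω i ∈ R i} ≤ ∑ i ∈ J, (μ i).real (R i) := by
  have hunion : {ω : ∀ i, X i | ∃ i ∈ J, ω i ∈ R i} = ⋃ i ∈ J, eval i ⁻¹' R i := by ext; simp
  rw [hunion]
  refine (measureReal_biUnion_finset_le _ _).trans (sum_le_sum fun i _ => ?_)
  rw [measureReal_def, (measurePreserving_eval μ i).measure_preimage
    MeasurableSet.of_discrete.nullMeasurableSet, measureReal_def]

variable [∀ i, Finite (X i)] [∀ i, MeasurableSingletonClass (X i)]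

variable (s : Finset κ) (R : κ → ∀ i, Set (X i))

open scoped Classical in
theorem sum_integral_sq_card_filter_mem_le (hR : ∀ i y, #{k ∈ s | y ∈ R k i} ≤ 2) :
    ∑ i, ∫ y, (#{k ∈ s | y ∈ R k i} : ℝ) ^ 2 ∂μ i ≤ 2 * ∑ k ∈ s, ∑ i, (μ i).real (R k i) := by
  have hsq (i) (y : X i) : (#{k ∈ s | y ∈ R k i} : ℝ) ^ 2 ≤ 2 * #{k ∈ s | y ∈ R k i} := by
    rw [sq]
    gcongr
    exact mod_cast hR i y
  calc ∑ i, ∫ y, (#{k ∈ s | y ∈ R k i} : ℝ) ^ 2 ∂μ i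
      ≤ ∑ i, ∫ y, 2 * (#{k ∈ s | y ∈ R k i} : ℝ) ∂μ i :=
        sum_le_sum fun i _ => integral_mono .of_finite .of_finite (hsq i)
    _ = 2 * ∑ k ∈ s, ∑ i, (μ i).real (R k i) := by
        rw [sum_comm, mul_sum]
        refine sum_congr rfl fun i _ => ?_
        rw [integral_const_mul, integral_card_filter s fun _ => .of_discrete]
        rfl

open scoped Classical in
theorem measureReal_add_mul_le_mul_hitCount_le {τ m N δ : ℝ} (hτ : |τ| = 1) (hδ₀ : 0 ≤ δ)
    (hδ₁ : δ ≤ 1) (hR : ∀ i y, #{k ∈ s | y ∈ R k i} ≤ 2)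
    (hN : ∑ k ∈ s, ∑ i, (μ i).real (R k i) ≤ N)
    (hm : τ * ∑ k ∈ s, (Measure.pi μ).real {ω | ∃ i, ω i ∈ R k i} ≤ m) :
    (Measure.pi μ).real {ω | m + δ * N ≤ τ * hitCount s R ω} ≤ Real.exp (-δ ^ 2 * N / 32) := by
  refine measureReal_add_mul_le_le_exp (h := fun i y => #{k ∈ s | y ∈ R k i}) hδ₀ hδ₁
    (fun i y => mod_cast hR i y) (fun ω i y => ?_)
    ((sum_integral_sq_card_filter_mem_le s R hR).trans (by gcongr)) ?_
  · rw [← mul_sub, abs_mul, hτ, one_mul, abs_sub_le_iff, sub_le_iff_le_add', sub_le_iff_le_add']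
    have h₁ := hitCount_le_add s R (update ω i y) ω i fun j hj => update_of_ne hj ..
    have h₂ := hitCount_le_add s R ω (update ω i y) i fun j hj => (update_of_ne hj ..).symm
    rw [update_self] at h₁
    exact ⟨by norm_cast; omega, by norm_cast; omega⟩
  · rw [integral_const_mul, show ∫ ω, (hitCount s R ω : ℝ) ∂Measure.pi μ = _ from
      integral_card_filter s fun _ => .of_discrete]
    exact hm

end Hits

/-! ### Numbers of collisions -/

section Collisions

open scoped Classical in
/-- The coordinates `i ∈ I` whose value is shared with some coordinate in `J i`. -/
noncomputable def collisions {ι Y : Type*} (I : Finset ι) (J : ι → Finset ι) (ω : ι → Y) :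
    Finset ι :=
  {i ∈ I | ∃ j ∈ J i, ω j = ω i}

variable {ι Y : Type*} {I : Finset ι} {J : ι → Finset ι}

theorem mem_collisions {ω : ι → Y} {i : ι} :
    i ∈ collisions I J ω ↔ i ∈ I ∧ ∃ j ∈ J i, ω j = ω i := by
  classical exact mem_filter

theorem card_collisions_erase_le_add_two [DecidableEq ι] {ω ω' : ι → Y} {i : ι}
    (h : ∀ j ≠ i, ω j = ω' j) :
    #(collisions I I.erase ω) ≤ #(collisions I I.erase ω') + 2 := by
  set F := collisions I I.erase ω \ collisions I I.erase ω'
  have hpartner {k} (hk : k ∈ F.erase i) : k ∈ I ∧ ω' k = ω i ∧ k ∉ collisions I I.erase ω' := by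
    obtain ⟨hki, hkF⟩ := mem_erase.1 hk
    obtain ⟨hkω, hkω'⟩ := mem_sdiff.1 hkF
    obtain ⟨hkI, j, hj, hjk⟩ := mem_collisions.1 hkω
    refine ⟨hkI, ?_, hkω'⟩
    rcases eq_or_ne j i with rfl | hji
    · rw [hjk, h k hki]
    · exact (hkω' (mem_collisions.2 ⟨hkI, j, hj, by rw [← h j hji, ← h k hki, hjk]⟩)).elim
  have hF : #(F.erase i) ≤ 1 := card_le_one.2 fun k hk l hl => by_contra fun hkl =>
    (hpartner hk).2.2 (mem_collisions.2 ⟨(hpartner hk).1, l,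
      mem_erase.2 ⟨Ne.symm hkl, (hpartner hl).1⟩, (hpartner hl).2.1.trans (hpartner hk).2.1.symm⟩)
  have hsplit : #(collisions I I.erase ω) ≤ #(collisions I I.erase ω') + #F := by
    rw [add_comm]; exact card_le_card_sdiff_add_card
  have herase := pred_card_le_card_erase (s := F) (a := i)
  omega

theorem collisions_congr {ω ω' : ι → Y}
    (hI : ∀ i ∈ I, ω i = ω' i) (hJ : ∀ i ∈ I, ∀ j ∈ J i, ω j = ω' j) :
    collisions I J ω = collisions I J ω' := by
  classical
  exact filter_congr fun i hi => exists_congr fun j => and_congr_right fun hj => by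
    rw [hI i hi, hJ i hi j hj]

theorem card_collisions_piecewise [DecidableEq ι] (hJ : ∀ i ∈ I, Disjoint (J i) I) (a b : ι → Y) :
    #(collisions I J (I.piecewise a b)) = hitCount I (fun i j => {y | j ∈ J i ∧ y = a i}) b := by
  classical
  refine congrArg card (Finset.ext fun i => ?_)
  rw [mem_collisions, mem_filter]
  refine and_congr_right fun hi => exists_congr fun j => and_congr_right fun hj => ?_
  rw [I.piecewise_eq_of_mem _ _ hi, I.piecewise_eq_of_notMem _ _ (disjoint_left.1 (hJ i hi) hj)]

variable [Fintype ι] [Finite Y] [MeasurableSpace Y] [MeasurableSingletonClass Y]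
  {μ : ι → Measure Y} [∀ i, IsProbabilityMeasure (μ i)] {β δ N : ℝ}

theorem integral_card_collisions :
    ∫ ω, (#(collisions I J ω) : ℝ) ∂Measure.pi μ =
      ∑ i ∈ I, (Measure.pi μ).real {ω | ∃ j ∈ J i, ω j = ω i} := by
  convert integral_card_filter (P := Measure.pi μ) (p := fun i ω => ∃ j ∈ J i, ω j = ω i) I
    fun _ => .of_discrete
  ext
  simp [mem_collisions]

theorem measureReal_add_mul_le_card_collisions_erase_le [DecidableEq ι] (hI : #I ≤ N)
    (hβ : ∀ y, ∑ i ∈ I, (μ i).real {y} ≤ β) (hδ₀ : 0 ≤ δ) (hδ₁ : δ ≤ 1) :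
    (Measure.pi μ).real {ω | β * #I + δ * N ≤ #(collisions I I.erase ω)} ≤
      Real.exp (-δ ^ 2 * N / 32) := by
  refine measureReal_add_mul_le_le_exp (h := fun i _ => if i ∈ I then 1 else 0) hδ₀ hδ₁
    (fun i _ => by split_ifs <;> norm_num) (fun ω i y => ?_) ?_ ?_
  · by_cases hi : i ∈ I
    · rw [if_pos hi, abs_sub_le_iff, sub_le_iff_le_add', sub_le_iff_le_add']
      have h₁ := card_collisions_erase_le_add_two (I := I) (ω := update ω i y) (ω' := ω) (i := i)
        fun j hj => update_of_ne hj ..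
      have h₂ := card_collisions_erase_le_add_two (I := I) (ω := ω) (ω' := update ω i y) (i := i)
        fun j hj => (update_of_ne hj ..).symm
      exact ⟨by norm_cast, by norm_cast⟩
    · have hupdate (j) (hj : j ∈ I) : update ω i y j = ω j :=
        update_of_ne (ne_of_mem_of_not_mem hj hi) ..
      have hcongr := collisions_congr (J := I.erase) hupdate fun _ _ j hj =>
        hupdate j (mem_of_mem_erase hj)
      rw [if_neg hi, hcongr, sub_self, abs_zero, add_zero]
  · have hcard : (#I : ℝ) ≤ 2 * N := by linarith [(#I).cast_nonneg (α := ℝ)]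
    simpa using hcard
  · have hone (i) : (Measure.pi μ).real {ω | ∃ j ∈ I.erase i, ω j = ω i} ≤ β := by
      refine measureReal_le_of_forall_piecewise_le μ .of_discrete {i} fun a => ?_
      have hcond : {b : ι → Y | piecewise {i} a b ∈ {ω | ∃ j ∈ I.erase i, ω j = ω i}} =
          {b | ∃ j ∈ I.erase i, b j = a i} := by
        ext b
        refine exists_congr fun j => and_congr_right fun hj => ?_
        simp [(mem_erase.1 hj).1]
      rw [hcond]
      calc (Measure.pi μ).real {b | ∃ j ∈ I.erase i, b j = a i}
          ≤ ∑ j ∈ I.erase i, (μ j).real {a i} := measureReal_setOf_exists_mem_le _ fun _ => {a i}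
        _ ≤ ∑ j ∈ I, (μ j).real {a i} := sum_le_sum_of_subset_of_nonneg (erase_subset _ _)
            fun _ _ _ => measureReal_nonneg
        _ ≤ β := hβ (a i)
    rw [integral_card_collisions, mul_comm, ← nsmul_eq_mul]
    exact sum_le_card_nsmul _ _ _ fun i _ => hone i

open scoped Classical in
theorem measureReal_add_mul_le_card_collisions_le (hI : #I ≤ N)
    (hJI : ∀ i ∈ I, Disjoint (J i) I) (hβ : ∀ i ∈ I, ∀ y, ∑ j ∈ J i, (μ j).real {y} ≤ β)
    (hβ₁ : β ≤ 1) (hJ : ∀ j, #{i ∈ I | j ∈ J i} ≤ 2) (hδ₀ : 0 ≤ δ) (hδ₁ : δ ≤ 1) :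
    (Measure.pi μ).real {ω | β * #I + δ * N ≤ #(collisions I J ω)} ≤
      Real.exp (-δ ^ 2 * N / 32) := by
  refine measureReal_le_of_forall_piecewise_le μ .of_discrete I fun a => ?_
  simp only [Set.mem_ofPred_eq, card_collisions_piecewise hJI]
  generalize hR : (fun i j => {y : Y | j ∈ J i ∧ y = a i}) = R
  have hmem (i j y) : y ∈ R i j ↔ j ∈ J i ∧ y = a i := by rw [← hR]; rfl
  have hmass (i : ι) (hi : i ∈ I) : ∑ j, (μ j).real (R i j) ≤ β := by
    have hzero (j) (hj : j ∉ J i) : R i j = ∅ := by ext; simp [hmem, hj]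
    have hsingle (j) (hj : j ∈ J i) : R i j = {a i} := by ext; simp [hmem, hj]
    rw [← sum_subset (subset_univ (J i)) fun j _ hj => by simp [hzero j hj],
      sum_congr rfl fun j hj => by rw [hsingle j hj]]
    exact hβ i hi (a i)
  have hmult (j : ι) (y : Y) : #{i ∈ I | y ∈ R i j} ≤ 2 :=
    (card_le_card (monotone_filter_right _ fun i _ hi => ((hmem i j y).1 hi).1)).trans (hJ j)
  have hmean : ∑ i ∈ I, (Measure.pi μ).real {b | ∃ j, b j ∈ R i j} ≤ β * #I := by
    rw [mul_comm, ← nsmul_eq_mul]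
    refine sum_le_card_nsmul _ _ _ fun i hi => le_trans ?_ (hmass i hi)
    simpa using measureReal_setOf_exists_mem_le (μ := μ) univ (R i)
  have hN : ∑ i ∈ I, ∑ j, (μ j).real (R i j) ≤ N := by
    refine (sum_le_card_nsmul _ _ _ fun i hi => (hmass i hi).trans hβ₁).trans ?_
    simpa using hI
  simpa using measureReal_add_mul_le_mul_hitCount_le (τ := 1) I R abs_one hδ₀ hδ₁
    hmult hN (by simpa using hmean)

end Collisions

/-! ### Blocked colours -/

section Blocking

variable {ι V C : Type*} {touch : ι → Finset V}

/-- The values by which coordinate `i` blocks the colour `c` at some vertex of `W`: a coordinate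
with value `some c` blocks `c` at every vertex it touches. -/
def blockingValues (touch : ι → Finset V) (W : Finset V) (c : C) (i : ι) : Set (Option C) :=
  {y | y = some c ∧ ∃ w ∈ W, w ∈ touch i}

open scoped Classical in
/-- The colours taken at the vertex `v` by some coordinate touching it. -/
noncomputable def blocked [Fintype C] (touch : ι → Finset V) (ω : ι → Option C) (v : V) :
    Finset C :=
  {c | ∃ i, v ∈ touch i ∧ ω i = some c}

section

variable [Fintype C]

theorem mem_blocked {ω : ι → Option C} {v : V} {c : C} :
    c ∈ blocked touch ω v ↔ ∃ i, v ∈ touch i ∧ ω i = some c := by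
  simp [blocked]

theorem blocked_congr {ω ω' : ι → Option C} {v : V} (h : ∀ i, v ∈ touch i → ω i = ω' i) :
    blocked touch ω v = blocked touch ω' v := by
  ext c
  rw [mem_blocked, mem_blocked]
  exact exists_congr fun i => and_congr_right fun hi => by rw [h i hi]

theorem exists_mem_blockingValues {ω : ι → Option C} {W : Finset V} {c : C} :
    (∃ i, ω i ∈ blockingValues touch W c i) ↔ ∃ w ∈ W, c ∈ blocked touch ω w := by
  simp only [mem_blocked, blockingValues, Set.mem_ofPred_eq]
  grind

theorem card_filter_forall_notMem_blocked [DecidableEq C] {κ : Type*} (s : Finset κ)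
    (W : κ → Finset V) (c : κ → C) (ω : ι → Option C) :
    (#{k ∈ s | ∀ w ∈ W k, c k ∉ blocked touch ω w} : ℝ) =
      #s - hitCount s (fun k => blockingValues touch (W k) (c k)) ω := by
  classical
  rw [eq_sub_iff_add_eq, hitCount]
  have hsplit := card_filter_add_card_filter_not (s := s) fun k =>
    ∃ i, ω i ∈ blockingValues touch (W k) (c k) i
  simp only [exists_mem_blockingValues] at hsplit ⊢
  push Not at hsplit
  rw [add_comm]
  exact mod_cast hsplit

end

variable [MeasurableSpace (Option C)] {μ : ι → Measure (Option C)}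

section

variable [Fintype ι] [Fintype C] [MeasurableSingletonClass (Option C)]
  [∀ i, IsProbabilityMeasure (μ i)]

theorem measureReal_setOf_forall_notMem_blocked (W : Finset V) (c : C) :
    (Measure.pi μ).real {ω | ∀ w ∈ W, c ∉ blocked touch ω w} =
      ∏ i, (1 - (μ i).real (blockingValues touch W c i)) := by
  rw [← measureReal_setOf_forall_notMem]
  congr 1
  ext ω
  simpa using (exists_mem_blockingValues (touch := touch) (ω := ω) (W := W) (c := c)).not.symm

theorem measureReal_setOf_exists_mem_blockingValues (W : Finset V) (c : C) :
    (Measure.pi μ).real {ω | ∃ i, ω i ∈ blockingValues touch W c i} =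
      1 - (Measure.pi μ).real {ω | ∀ w ∈ W, c ∉ blocked touch ω w} := by
  rw [← probReal_compl_eq_one_sub .of_discrete]
  congr 1
  ext ω
  simpa using exists_mem_blockingValues (touch := touch) (ω := ω) (W := W) (c := c)

end

variable [DecidableEq V]

theorem measureReal_blockingValues (W : Finset V) (c : C) (i : ι) :
    (μ i).real (blockingValues touch W c i) =
      if ∃ w ∈ W, w ∈ touch i then (μ i).real {some c} else 0 := by
  split_ifs with h <;> simp [blockingValues, h]

variable [Fintype ι]

theorem sum_measureReal_blockingValues_le (c : C)
    (hmass : ∀ v, ∑ i with v ∈ touch i, (μ i).real {some c} ≤ 1) (W : Finset V) :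
    ∑ i, (μ i).real (blockingValues touch W c i) ≤ #W := by
  calc ∑ i, (μ i).real (blockingValues touch W c i)
      ≤ ∑ i, ∑ w ∈ W, if w ∈ touch i then (μ i).real {some c} else 0 := by
        refine sum_le_sum fun i _ => ?_
        rw [measureReal_blockingValues]
        split_ifs with h
        · obtain ⟨w, hw, hwi⟩ := h
          calc (μ i).real {some c} = if w ∈ touch i then (μ i).real {some c} else 0 :=
                (if_pos hwi).symm
            _ ≤ _ := single_le_sum (f := fun w => if w ∈ touch i then (μ i).real {some c} else 0)
                (fun _ _ => by positivity) hw
        · positivity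
    _ = ∑ w ∈ W, ∑ i with w ∈ touch i, (μ i).real {some c} := by
        rw [sum_comm]
        simp only [sum_filter]
    _ ≤ #W := by simpa using sum_le_card_nsmul W _ 1 fun w _ => hmass w

variable [Fintype C] [MeasurableSingletonClass (Option C)] [∀ i, IsProbabilityMeasure (μ i)]
  {κ δ N : ℝ}

theorem mul_le_measureReal_setOf_notMem_blocked
    (hκ : ∀ v, (Measure.pi μ).real {ω | c ∉ blocked touch ω v} = κ) (u v : V) :
    κ * κ ≤ (Measure.pi μ).real {ω | ∀ w ∈ ({u, v} : Finset V), c ∉ blocked touch ω w} := by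
  have hsingle (w : V) : κ = ∏ i, (1 - (μ i).real (blockingValues touch {w} c i)) := by
    rw [← measureReal_setOf_forall_notMem_blocked, ← hκ w]
    simp
  rw [measureReal_setOf_forall_notMem_blocked]
  nth_rw 1 [hsingle u]
  rw [hsingle v, ← prod_mul_distrib]
  have hle (W : Finset V) (i : ι) : 0 ≤ 1 - (μ i).real (blockingValues touch W c i) :=
    sub_nonneg.2 measureReal_le_one
  refine prod_le_prod (fun i _ => mul_nonneg (hle _ i) (hle _ i)) fun i _ => ?_
  have h₀ : 0 ≤ (μ i).real {some c} := measureReal_nonneg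
  have h₁ : (μ i).real {some c} ≤ 1 := measureReal_le_one
  simp only [measureReal_blockingValues, mem_insert, mem_singleton, exists_eq_or_imp,
    exists_eq_left]
  split_ifs <;> first | nlinarith | grind

variable [DecidableEq C]

theorem measureReal_card_filter_notMem_blocked_lt_le (s : Finset C)
    (hκ : ∀ v, ∀ c ∈ s, (Measure.pi μ).real {ω | c ∉ blocked touch ω v} = κ)
    (hmass : ∀ v c, ∑ i with v ∈ touch i, (μ i).real {some c} ≤ 1) (hδ₀ : 0 ≤ δ) (hδ₁ : δ ≤ 1)
    (u v : V) :
    (Measure.pi μ).real {ω | (#{c ∈ s | ∀ w ∈ ({u, v} : Finset V), c ∉ blocked touch ω w} : ℝ) <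
      (κ ^ 2 - δ) * #s} ≤ Real.exp (-δ ^ 2 * #s / 64) := by
  classical
  set R : C → ι → Set (Option C) := fun c => blockingValues touch {u, v} c
  have hR (i : ι) (y : Option C) : #{c ∈ s | y ∈ R c i} ≤ 2 := by
    refine (card_le_one.2 fun a ha b hb => ?_).trans one_le_two
    exact Option.some_injective _ ((mem_filter.1 ha).2.1.symm.trans (mem_filter.1 hb).2.1)
  have hN : ∑ c ∈ s, ∑ i, (μ i).real (R c i) ≤ 2 * #s := by
    rw [mul_comm, ← nsmul_eq_mul]
    refine sum_le_card_nsmul _ _ _ fun c _ =>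
      (sum_measureReal_blockingValues_le c (hmass · c) _).trans ?_
    exact mod_cast card_le_two
  have hmean : ∑ c ∈ s, (Measure.pi μ).real {ω | ∃ i, ω i ∈ R c i} ≤ (1 - κ ^ 2) * #s := by
    rw [mul_comm, ← nsmul_eq_mul]
    refine sum_le_card_nsmul _ _ _ fun c hc => ?_
    rw [measureReal_setOf_exists_mem_blockingValues, sq]
    exact sub_le_sub_left (mul_le_measureReal_setOf_notMem_blocked (hκ · c hc) u v) 1
  have htail := measureReal_add_mul_le_mul_hitCount_le (τ := 1) s R (δ := δ / 2) abs_one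
    (by positivity) (by linarith) hR hN ((one_mul _).trans_le hmean)
  refine (measureReal_mono fun ω hω => ?_).trans (htail.trans_eq (by ring_nf))
  rw [Set.mem_ofPred_eq, card_filter_forall_notMem_blocked] at hω
  rw [Set.mem_ofPred_eq]
  linarith

theorem measureReal_lt_card_filter_notMem_blocked_le (s : Finset V) (c : C) (hsN : #s ≤ N)
    (hκ : ∀ v, (Measure.pi μ).real {ω | c ∉ blocked touch ω v} = κ)
    (hmass : ∀ v, ∑ i with v ∈ touch i, (μ i).real {some c} ≤ 1) (htouch : ∀ i, #(touch i) ≤ 2)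
    (hδ₀ : 0 ≤ δ) (hδ₁ : δ ≤ 1) :
    (Measure.pi μ).real {ω | κ * #s + δ * N < #{x ∈ s | c ∉ blocked touch ω x}} ≤
      Real.exp (-δ ^ 2 * N / 32) := by
  classical
  set R : V → ι → Set (Option C) := fun x => blockingValues touch {x} c
  have hR (i : ι) (y : Option C) : #{x ∈ s | y ∈ R x i} ≤ 2 := by
    refine (card_le_card fun x hx => ?_).trans (htouch i)
    simpa using (mem_filter.1 hx).2.2
  have hN : ∑ x ∈ s, ∑ i, (μ i).real (R x i) ≤ N := by
    refine (sum_le_card_nsmul _ _ 1 fun x _ => ?_).trans (by simpa using hsN)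
    simpa using sum_measureReal_blockingValues_le c hmass {x}
  have hmean : -1 * ∑ x ∈ s, (Measure.pi μ).real {ω | ∃ i, ω i ∈ R x i} ≤ -(1 - κ) * #s := by
    simp only [R, measureReal_setOf_exists_mem_blockingValues, mem_singleton, forall_eq, hκ,
      sum_const, nsmul_eq_mul]
    linarith
  have htail := measureReal_add_mul_le_mul_hitCount_le (τ := -1) s R (by simp) hδ₀ hδ₁ hR hN hmean
  refine (measureReal_mono fun ω hω => ?_).trans htail
  have hcount := card_filter_forall_notMem_blocked (touch := touch) s ({·}) (fun _ => c) ω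
  simp only [mem_singleton, forall_eq] at hcount
  rw [Set.mem_ofPred_eq, hcount] at hω
  rw [Set.mem_ofPred_eq]
  linarith

end Blocking

/-! ### The law of a round -/

theorem one_sub_sum_le_prod_one_sub {ι : Type*} (s : Finset ι) {f : ι → ℝ} (h₀ : ∀ i, 0 ≤ f i)
    (h₁ : ∀ i, f i ≤ 1) : 1 - ∑ i ∈ s, f i ≤ ∏ i ∈ s, (1 - f i) := by
  classical
  induction s using Finset.induction_on with
  | empty => simp
  | insert a s ha ih =>
    rw [sum_insert ha, prod_insert ha]
    nlinarith [h₀ a, h₁ a, sum_nonneg fun i (_ : i ∈ s) => h₀ i]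

section Law

variable {V C : Type*} {A : Finset (Sym2 V)} {Λ : Sym2 V → Finset C} {coin : V × C → unitInterval}
  {β : ℝ}

/-- The vertices at which a coordinate of `roundLaw` blocks the colour it takes. -/
def roundTouch [DecidableEq V] (A : Finset (Sym2 V)) : A ⊕ V × C → Finset V
  | .inl e => e.1.toFinset
  | .inr vc => {vc.1}

section

variable [DecidableEq V]

theorem mem_roundTouch_inl {e : A} {v : V} :
    v ∈ roundTouch (C := C) A (.inl e) ↔ v ∈ e.1 :=
  Sym2.mem_toFinset

theorem mem_roundTouch_inr {vc : V × C} {v : V} : v ∈ roundTouch A (.inr vc) ↔ v = vc.1 :=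
  mem_singleton

theorem card_roundTouch_le_two (i : A ⊕ V × C) : #(roundTouch A i) ≤ 2 := by
  rcases i with ⟨⟨_, _⟩, _⟩ | ⟨v, _⟩
  · exact (congrArg card Sym2.toFinset_mk_eq).trans_le card_le_two
  · exact (card_singleton v).trans_le one_le_two

end

variable [MeasurableSpace (Option C)]

/-- The law of a single round: every edge `e` of the batch `A` picks a uniformly random colour of
its list `Λ e`, and an independent coin of bias `coin (v, c)` blocks `c` at `v`. -/
noncomputable def roundLaw (A : Finset (Sym2 V)) (Λ : Sym2 V → Finset C)
    (coin : V × C → unitInterval) : A ⊕ V × C → Measure (Option C)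
  | .inl e => uniformOn ((Λ e).map .some : Finset (Option C))
  | .inr vc => bernoulliMeasure (some vc.2) none (coin vc)

variable [MeasurableSingletonClass (Option C)]

theorem isProbabilityMeasure_roundLaw (hΛ : ∀ e ∈ A, (Λ e).Nonempty) (i : A ⊕ V × C) :
    IsProbabilityMeasure (roundLaw A Λ coin i) :=
  match i with
  | .inl e => isProbabilityMeasure_uniformOn (finite_toSet _) (by simpa using hΛ e e.2)
  | .inr _ => inferInstanceAs (IsProbabilityMeasure (bernoulliMeasure _ _ _))

theorem roundLaw_inl_real_singleton [DecidableEq C] (e : A) (y : Option C) :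
    (roundLaw A Λ coin (.inl e)).real {y} =
      if y ∈ (Λ e).map .some then (#(Λ e) : ℝ)⁻¹ else 0 := by
  have h := uniformOn_apply_finset (s := (Λ e).map .some) (t := {y})
  rw [coe_singleton] at h
  rw [measureReal_def, roundLaw, h, inter_singleton]
  split_ifs <;> simp

theorem roundLaw_inr_real_some [DecidableEq C] (v : V) (c c' : C) :
    (roundLaw A Λ coin (.inr (v, c'))).real {some c} = if c' = c then (coin (v, c) : ℝ) else 0 := by
  rw [roundLaw, bernoulliMeasure_real_apply _ (measurableSet_singleton _)]
  split_ifs with h <;> simp_all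

variable [Fintype V] [Fintype C] [DecidableEq V] [DecidableEq C]

theorem prod_one_sub_roundLaw (v : V) (c : C) :
    ∏ i, (1 - (roundLaw A Λ coin i).real (blockingValues (roundTouch A) {v} c i)) =
      (1 - coin (v, c)) * ∏ e ∈ A with v ∈ e ∧ c ∈ Λ e, (1 - (#(Λ e) : ℝ)⁻¹) := by
  simp only [measureReal_blockingValues, mem_singleton, exists_eq_left, Fintype.prod_sum_type,
    mem_roundTouch_inl, mem_roundTouch_inr, roundLaw_inl_real_singleton]
  rw [mul_comm]
  congr 1
  · rw [prod_eq_single (v, c)]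
    · simp [roundLaw_inr_real_some]
    · rintro ⟨v', c'⟩ - h
      grind [roundLaw_inr_real_some]
    · simp
  · rw [prod_filter, ← prod_coe_sort A]
    refine prod_congr rfl fun e _ => ?_
    split_ifs <;> simp_all

theorem sum_roundLaw (v : V) (c : C) :
    ∑ i with v ∈ roundTouch A i, (roundLaw A Λ coin i).real {some c} =
      coin (v, c) + ∑ e ∈ A with v ∈ e ∧ c ∈ Λ e, (#(Λ e) : ℝ)⁻¹ := by
  rw [sum_filter, Fintype.sum_sum_type, add_comm]
  simp only [mem_roundTouch_inl, mem_roundTouch_inr, roundLaw_inl_real_singleton]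
  congr 1
  · rw [sum_eq_single (v, c)]
    · simp [roundLaw_inr_real_some]
    · rintro ⟨v', c'⟩ - h
      grind [roundLaw_inr_real_some]
    · simp
  · rw [sum_filter, ← sum_coe_sort A]
    refine sum_congr rfl fun e _ => ?_
    split_ifs <;> simp_all

end Law

section Coin

variable {V C : Type*} [DecidableEq V] [DecidableEq C] {A : Finset (Sym2 V)}
  {Λ : Sym2 V → Finset C} {β : ℝ}

theorem exists_equalizing_coin (hβ₁ : β < 1)
    (hβ : ∀ v c, ∑ e ∈ A with v ∈ e ∧ c ∈ Λ e, (#(Λ e) : ℝ)⁻¹ ≤ β) :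
    ∃ coin : V × C → unitInterval, (∀ vc, (coin vc : ℝ) ≤ β) ∧ ∀ v c,
      (1 - coin (v, c)) * ∏ e ∈ A with v ∈ e ∧ c ∈ Λ e, (1 - (#(Λ e) : ℝ)⁻¹) = 1 - β := by
  suffices h : ∀ vc : V × C, ∃ t : unitInterval, (t : ℝ) ≤ β ∧
      (1 - t) * ∏ e ∈ A with vc.1 ∈ e ∧ vc.2 ∈ Λ e, (1 - (#(Λ e) : ℝ)⁻¹) = 1 - β by
    choose coin hle heq using h
    exact ⟨coin, hle, fun v c => heq (v, c)⟩
  rintro ⟨v, c⟩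
  have hinv₀ : ∀ e, 0 ≤ (#(Λ e) : ℝ)⁻¹ := fun e => by positivity
  have hinv₁ : ∀ e, (#(Λ e) : ℝ)⁻¹ ≤ 1 := fun e => Nat.cast_inv_le_one _
  set q := ∏ e ∈ A with v ∈ e ∧ c ∈ Λ e, (1 - (#(Λ e) : ℝ)⁻¹)
  have hq : 1 - β ≤ q :=
    (sub_le_sub_left (hβ v c) 1).trans (one_sub_sum_le_prod_one_sub _ hinv₀ hinv₁)
  have hq₁ : q ≤ 1 := prod_le_one (fun e _ => sub_nonneg.2 (hinv₁ e)) fun e _ => by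
    linarith [hinv₀ e]
  have hq₀ : 0 < q := by linarith
  have hle : 1 - (1 - β) / q ≤ β := by
    have : 1 - β ≤ (1 - β) / q := le_div_self (by linarith) hq₀ hq₁
    linarith
  have hdiv : (1 - β) / q ≤ 1 := (div_le_one hq₀).2 hq
  refine ⟨⟨1 - (1 - β) / q, by linarith, by linarith⟩, hle, ?_⟩
  rw [sub_sub_cancel, div_mul_cancel₀ _ hq₀.ne']

end Coin

/-! ### Losses in lists and colour degrees -/

section ClosedNbhd

variable {V : Type*} [Fintype V] [DecidableEq V] (G : SimpleGraph V) [DecidableRel G.Adj] {D : ℕ}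

/-- The closed neighbourhood of `v` in `G`. -/
def closedNbhd (v : V) : Finset V := insert v (G.neighborFinset v)

variable {G}

theorem self_mem_closedNbhd {v : V} : v ∈ closedNbhd G v := mem_insert_self _ _

theorem mem_closedNbhd_of_adj {v w : V} (h : G.Adj v w) : w ∈ closedNbhd G v :=
  mem_insert_of_mem (by simpa using h)

theorem mem_closedNbhd_comm {v w : V} : w ∈ closedNbhd G v ↔ v ∈ closedNbhd G w := by
  simp [closedNbhd, G.adj_comm, eq_comm]

theorem mem_closedNbhd_of_mem_edge {e : Sym2 V} (he : e ∈ G.edgeSet) {v w : V} (hv : v ∈ e)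
    (hw : w ∈ e) : w ∈ closedNbhd G v := by
  obtain rfl | hvw := eq_or_ne v w
  · exact self_mem_closedNbhd
  · rw [(Sym2.mem_and_mem_iff hvw).1 ⟨hv, hw⟩] at he
    exact mem_closedNbhd_of_adj he

theorem card_biUnion_closedNbhd_le (hD : ∀ v, G.degree v ≤ D) (s : Finset V) :
    #(s.biUnion (closedNbhd G)) ≤ #s * (D + 1) :=
  card_biUnion_le_card_mul _ _ _ fun v _ =>
    (card_insert_le _ _).trans <| by simpa using hD v

theorem card_biUnion_biUnion_closedNbhd_le (hD : ∀ v, G.degree v ≤ D) (v : V) :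
    #(((closedNbhd G v).biUnion (closedNbhd G)).biUnion (closedNbhd G)) ≤ (D + 1) ^ 3 := by
  have h := card_biUnion_closedNbhd_le hD {v}
  rw [singleton_biUnion, card_singleton, one_mul] at h
  calc _ ≤ #(closedNbhd G v) * (D + 1) * (D + 1) :=
        (card_biUnion_closedNbhd_le hD _).trans <| by gcongr; exact card_biUnion_closedNbhd_le hD _
    _ ≤ (D + 1) * (D + 1) * (D + 1) := by gcongr
    _ = (D + 1) ^ 3 := by ring

theorem mem_closedNbhd_of_mem_roundTouch {C : Type*} {A : Finset (Sym2 V)}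
    (hA : ∀ e ∈ A, e ∈ G.edgeSet)
    {i : A ⊕ V × C} {u w : V}
    (hu : u ∈ roundTouch A i) (hw : w ∈ roundTouch A i) : w ∈ closedNbhd G u := by
  rcases i with e | vc
  · exact mem_closedNbhd_of_mem_edge (hA e e.2) (mem_roundTouch_inl.1 hu)
      (mem_roundTouch_inl.1 hw)
  · rw [mem_roundTouch_inr.1 hu, mem_roundTouch_inr.1 hw]
    exact self_mem_closedNbhd

end ClosedNbhd

section Failures

variable {V C J ι : Type*} [Fintype V] [DecidableEq C] [DecidableEq J] (G : SimpleGraph V)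
  [DecidableRel G.Adj] (χ : Sym2 V → J) (Λ : Sym2 V → Finset C)

/-- The neighbours of `v` along edges of the class `j` whose list still contains `c`; their number
is the degree of the colour `c` at `v` in the class `j`. -/
def colourNbrs (v : V) (j : J) (c : C) : Finset V :=
  {x ∈ G.neighborFinset v | χ s(v, x) = j ∧ c ∈ Λ s(v, x)}

variable [DecidableEq V] [Fintype C] (touch : ι → Finset V) (κ δ : ℝ)

/-- Some edge at `v` keeps a proportion below `κ ^ 2 - δ` of its list. -/
def listLoss (v : V) : Set (ι → Option C) :=
  {ω | ∃ x ∈ G.neighborFinset v,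
    (#{c ∈ Λ s(v, x) | ∀ w ∈ ({v, x} : Finset V), c ∉ blocked touch ω w} : ℝ) <
      (κ ^ 2 - δ) * #(Λ s(v, x))}

/-- Some colour degree at `v` stays above a proportion `κ` by more than `δ * G.degree v`. -/
def degreeExcess (v : V) : Set (ι → Option C) :=
  {ω | ∃ j, ∃ c ∈ (G.neighborFinset v).biUnion fun x => Λ s(v, x),
    κ * #(colourNbrs G χ Λ v j c) + δ * G.degree v <
      #{x ∈ colourNbrs G χ Λ v j c | c ∉ blocked touch ω x}}

variable {G χ Λ touch κ δ} {N D M : ℕ}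

theorem dependsOn_listLoss (v : V) : DependsOn (· ∈ listLoss G Λ touch κ δ v)
    {i | ∃ w ∈ touch i, w ∈ closedNbhd G v} := by
  intro ω ω' h
  have hblocked {w : V} (hw : w ∈ closedNbhd G v) : blocked touch ω w = blocked touch ω' w :=
    blocked_congr fun i hi => h i ⟨w, hi, hw⟩
  refine propext <| exists_congr fun x => and_congr_right fun hx => ?_
  have hv := hblocked self_mem_closedNbhd
  have hx' := hblocked (mem_insert_of_mem hx)
  simp only [mem_insert, mem_singleton, forall_eq_or_imp, forall_eq, hv, hx']

theorem dependsOn_degreeExcess (v : V) : DependsOn (· ∈ degreeExcess G χ Λ touch κ δ v)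
    {i | ∃ w ∈ touch i, w ∈ closedNbhd G v} := by
  intro ω ω' h
  refine propext <| exists_congr fun j => exists_congr fun c => and_congr_right fun _ => ?_
  have hfilter : {x ∈ colourNbrs G χ Λ v j c | c ∉ blocked touch ω x} =
      {x ∈ colourNbrs G χ Λ v j c | c ∉ blocked touch ω' x} := filter_congr fun x hx => by
    rw [blocked_congr fun i hi => h i ⟨x, hi, mem_insert_of_mem (mem_filter.1 hx).1⟩]
  rw [hfilter]

variable [Fintype ι] [MeasurableSpace (Option C)] [MeasurableSingletonClass (Option C)]
  {μ : ι → Measure (Option C)} [∀ i, IsProbabilityMeasure (μ i)]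

theorem measureReal_listLoss_le {N : ℝ}
    (hκ : ∀ v c, (Measure.pi μ).real {ω | c ∉ blocked touch ω v} = κ)
    (hmass : ∀ v c, ∑ i with v ∈ touch i, (μ i).real {some c} ≤ 1) (hδ₀ : 0 ≤ δ) (hδ₁ : δ ≤ 1)
    (v : V) (hN : ∀ x, G.Adj v x → N ≤ #(Λ s(v, x))) :
    (Measure.pi μ).real (listLoss G Λ touch κ δ v) ≤ G.degree v * Real.exp (-δ ^ 2 * N / 64) := by
  have hunion : listLoss G Λ touch κ δ v = ⋃ x ∈ G.neighborFinset v,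
      {ω | (#{c ∈ Λ s(v, x) | ∀ w ∈ ({v, x} : Finset V), c ∉ blocked touch ω w} : ℝ) <
        (κ ^ 2 - δ) * #(Λ s(v, x))} := by
    ext ω
    simp only [listLoss, Set.mem_ofPred_eq, Set.mem_iUnion, exists_prop]
  rw [hunion, ← nsmul_eq_mul]
  refine (measureReal_biUnion_finset_le _ _).trans (sum_le_card_nsmul _ _ _ fun x hx => ?_)
  have hx' : N ≤ #(Λ s(v, x)) := hN x (by simpa using hx)
  have hexp : Real.exp (-δ ^ 2 * #(Λ s(v, x)) / 64) ≤ Real.exp (-δ ^ 2 * N / 64) :=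
    Real.exp_le_exp.2 <| by linarith [mul_le_mul_of_nonneg_left hx' (sq_nonneg δ)]
  convert (measureReal_card_filter_notMem_blocked_lt_le (Λ s(v, x)) (fun w c _ => hκ w c) hmass
    hδ₀ hδ₁ v x).trans hexp

theorem measureReal_degreeExcess_le [Fintype J]
    (hκ : ∀ v c, (Measure.pi μ).real {ω | c ∉ blocked touch ω v} = κ)
    (hmass : ∀ v c, ∑ i with v ∈ touch i, (μ i).real {some c} ≤ 1)
    (htouch : ∀ i, #(touch i) ≤ 2) (hδ₀ : 0 ≤ δ) (hδ₁ : δ ≤ 1) (v : V)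
    (hM : ∀ x, G.Adj v x → #(Λ s(v, x)) ≤ M) :
    (Measure.pi μ).real (degreeExcess G χ Λ touch κ δ v) ≤
      (Fintype.card J * (G.degree v * M)) * Real.exp (-δ ^ 2 * G.degree v / 32) := by
  have hunion : degreeExcess G χ Λ touch κ δ v =
      ⋃ jc ∈ (univ : Finset J) ×ˢ (G.neighborFinset v).biUnion fun x => Λ s(v, x),
        {ω | κ * #(colourNbrs G χ Λ v jc.1 jc.2) + δ * G.degree v <
          #{x ∈ colourNbrs G χ Λ v jc.1 jc.2 | jc.2 ∉ blocked touch ω x}} := by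
    ext ω
    simp only [degreeExcess, Set.mem_ofPred_eq, Set.mem_iUnion, mem_product, mem_univ, true_and,
      Prod.exists, exists_prop]
  have hcard : #((univ : Finset J) ×ˢ (G.neighborFinset v).biUnion fun x => Λ s(v, x)) ≤
      Fintype.card J * (G.degree v * M) := by
    rw [card_product]
    exact Nat.mul_le_mul_left _ <| card_biUnion_le_card_mul _ _ _ fun x hx =>
      hM x (by simpa using hx)
  rw [hunion]
  refine (measureReal_biUnion_finset_le _ _).trans ?_
  refine (sum_le_card_nsmul _ _ (Real.exp (-δ ^ 2 * G.degree v / 32)) fun jc _ => ?_).trans ?_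
  · refine measureReal_lt_card_filter_notMem_blocked_le _ _ ?_ (fun v => hκ v _)
      (fun v => hmass v _) htouch hδ₀ hδ₁
    exact mod_cast card_filter_le _ _
  · rw [nsmul_eq_mul]
    gcongr
    exact mod_cast hcard

end Failures

/-! ### Conflicts -/

section Conflicts

variable {V C : Type*} [DecidableEq V]

variable (C) in
/-- The coordinates of a round that belong to batch edges at `v`. -/
def incidentCoords (A : Finset (Sym2 V)) (v : V) : Finset (A ⊕ V × C) :=
  ({e : A | v ∈ e.1} : Finset A).map .inl

variable {A : Finset (Sym2 V)} {v w : V}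

theorem mem_incidentCoords {i : A ⊕ V × C} :
    i ∈ incidentCoords C A v ↔ ∃ e : A, v ∈ e.1 ∧ .inl e = i := by
  simp [incidentCoords]

theorem inl_mem_incidentCoords {e : A} : .inl e ∈ incidentCoords C A v ↔ v ∈ e.1 := by
  simp [mem_incidentCoords]

theorem card_incidentCoords : #(incidentCoords C A v) = #{e ∈ A | v ∈ e} := by
  rw [incidentCoords, card_map, ← card_map (Embedding.subtype (· ∈ A))]
  congr 1
  ext e
  simp [and_comm]

section

variable [DecidableEq C] [MeasurableSpace (Option C)] [MeasurableSingletonClass (Option C)]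
  {Λ : Sym2 V → Finset C} {coin : V × C → unitInterval}

theorem sum_incidentCoords_roundLaw_le {β : ℝ} (hβ₀ : 0 ≤ β)
    (hβ : ∀ v c, ∑ e ∈ A with v ∈ e ∧ c ∈ Λ e, (#(Λ e) : ℝ)⁻¹ ≤ β) (v : V) (y : Option C) :
    ∑ i ∈ incidentCoords C A v, (roundLaw A Λ coin i).real {y} ≤ β := by
  simp only [incidentCoords, sum_map, Embedding.inl_apply, roundLaw_inl_real_singleton]
  rcases y with _ | c
  · simpa using hβ₀
  · convert hβ v c using 1
    rw [sum_filter, sum_filter, ← sum_coe_sort A]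
    refine sum_congr rfl fun e _ => ?_
    split_ifs <;> simp_all

end

variable [Fintype V]

theorem card_incidentCoords_le_degree {G : SimpleGraph V} [DecidableRel G.Adj]
    (hA : ∀ e ∈ A, e ∈ G.edgeSet) : #(incidentCoords C A v) ≤ G.degree v := by
  rw [card_incidentCoords, ← G.card_incidenceFinset_eq_degree]
  refine card_le_card fun e he => ?_
  rw [mem_filter] at he
  exact (G.mem_incidenceFinset v e).2 ⟨hA e he.1, he.2⟩

/-- The coordinates of a round that belong to batch edges which avoid `v` and meet the batch edge
of the coordinate `i`. -/
def adjacentCoords (A : Finset (Sym2 V)) (v : V) : A ⊕ V × C → Finset (A ⊕ V × C)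
  | .inl e => ({g : A | v ∉ g.1 ∧ ∃ w ∈ e.1, w ∈ g.1} : Finset A).map .inl
  | .inr _ => ∅

theorem inl_mem_adjacentCoords {e g : A} :
    .inl g ∈ adjacentCoords (C := C) A v (.inl e) ↔ v ∉ g.1 ∧ ∃ w ∈ e.1, w ∈ g.1 := by
  simp [adjacentCoords]

theorem disjoint_adjacentCoords_incidentCoords (i : A ⊕ V × C) :
    Disjoint (adjacentCoords A v i) (incidentCoords C A v) := by
  rcases i with e | _
  · simp only [adjacentCoords, incidentCoords, disjoint_map, disjoint_filter]
    grind
  · exact disjoint_empty_left _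

theorem adjacentCoords_subset_incidentCoords {e : A} (he : e.1 = s(v, w)) :
    adjacentCoords (C := C) A v (.inl e) ⊆ incidentCoords C A w := by
  refine map_subset_map.2 fun g hg => ?_
  simp only [he, mem_filter, mem_univ, true_and, Sym2.mem_iff, exists_eq_or_imp,
    exists_eq_left] at hg ⊢
  exact hg.2.resolve_left hg.1

variable [DecidableEq C]

theorem card_filter_mem_adjacentCoords_le_two (j : A ⊕ V × C) :
    #{i ∈ incidentCoords C A v | j ∈ adjacentCoords A v i} ≤ 2 := by
  rcases j with g | vc
  · refine (card_le_card_of_injOn (t := g.1.toFinset.image fun w => s(v, w))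
      (Sum.elim (fun e => e.1) fun _ => s(v, v)) (fun i hi => ?_) fun i hi j hj hij => ?_).trans
      (card_image_le.trans (card_roundTouch_le_two (C := C) (.inl g)))
    · obtain ⟨hi, hg⟩ := mem_filter.1 hi
      obtain ⟨e, ⟨w, he⟩, rfl⟩ := mem_incidentCoords.1 hi
      obtain ⟨hvg, u, hue, hug⟩ := inl_mem_adjacentCoords.1 hg
      rw [he, Sym2.mem_iff] at hue
      obtain rfl | rfl := hue
      · exact absurd hug hvg
      · exact mem_image.2 ⟨u, Sym2.mem_toFinset.2 hug, he.symm⟩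
    · obtain ⟨e, -, rfl⟩ := mem_incidentCoords.1 (mem_filter.1 hi).1
      obtain ⟨f, -, rfl⟩ := mem_incidentCoords.1 (mem_filter.1 hj).1
      exact congrArg _ (Subtype.ext hij)
  · rw [filter_eq_empty_iff.2 fun i hi => ?_]
    · simp
    · obtain ⟨e, -, rfl⟩ := mem_incidentCoords.1 hi
      simp [adjacentCoords]

/-- The edges of `A` that share a vertex and a colour with another edge of `A`. -/
def conflicting (A : Finset (Sym2 V)) (col : Sym2 V → C) : Finset (Sym2 V) :=
  {e ∈ A | ∃ g ∈ A, g ≠ e ∧ (∃ w ∈ e, w ∈ g) ∧ col g = col e}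

theorem card_filter_mem_conflicting_le {col : Sym2 V → C} {ω : A ⊕ V × C → Option C}
    (hω : ∀ e : A, ω (.inl e) = some (col e)) (v : V) :
    #{e ∈ conflicting A col | v ∈ e} ≤
      #(collisions (incidentCoords C A v) (incidentCoords C A v).erase ω) +
        #(collisions (incidentCoords C A v) (adjacentCoords A v) ω) := by
  refine le_trans (card_le_card fun e he => ?_) <|
    (card_image_le (f := Sum.elim (fun e => e.1) fun _ => s(v, v))).trans (card_union_le _ _)
  simp only [conflicting, mem_filter] at he
  obtain ⟨⟨heA, g, hgA, hge, hmeet, hcol⟩, hve⟩ := he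
  have heq : ω (.inl ⟨g, hgA⟩) = ω (.inl ⟨e, heA⟩) := by rw [hω, hω, hcol]
  refine mem_image.2 ⟨.inl ⟨e, heA⟩, ?_, rfl⟩
  simp only [mem_union, mem_collisions, inl_mem_incidentCoords, hve, true_and]
  by_cases hvg : v ∈ g
  · refine .inl ⟨.inl ⟨g, hgA⟩, mem_erase.2 ⟨?_, inl_mem_incidentCoords.2 hvg⟩, heq⟩
    simpa using hge
  · exact .inr ⟨.inl ⟨g, hgA⟩, inl_mem_adjacentCoords.2 ⟨hvg, hmeet⟩, heq⟩

variable (G : SimpleGraph V) [DecidableRel G.Adj] {Λ : Sym2 V → Finset C}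
  {coin : V × C → unitInterval} {β δ : ℝ}

/-- The batch edges at `v` show too many collisions, among themselves or with batch edges that
avoid `v`. -/
def conflictExcess (A : Finset (Sym2 V)) (β δ : ℝ) (v : V) : Set (A ⊕ V × C → Option C) :=
  {ω | β * #(incidentCoords C A v) + δ * G.degree v ≤
    #(collisions (incidentCoords C A v) (incidentCoords C A v).erase ω)} ∪
  {ω | β * #(incidentCoords C A v) + δ * G.degree v ≤
    #(collisions (incidentCoords C A v) (adjacentCoords A v) ω)}

variable {G}

theorem dependsOn_conflictExcess (hA : ∀ e ∈ A, e ∈ G.edgeSet) (v : V) :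
    DependsOn (· ∈ conflictExcess (C := C) G A β δ v)
      {i | ∃ w ∈ roundTouch A i, w ∈ closedNbhd G v} := by
  intro ω ω' h
  have hI (i) (hi : i ∈ incidentCoords C A v) : ω i = ω' i := by
    obtain ⟨e, hve, rfl⟩ := mem_incidentCoords.1 hi
    exact h _ ⟨v, mem_roundTouch_inl.2 hve, self_mem_closedNbhd⟩
  have hJ (i) (hi : i ∈ incidentCoords C A v) (j) (hj : j ∈ adjacentCoords A v i) :
      ω j = ω' j := by
    obtain ⟨e, hve, rfl⟩ := mem_incidentCoords.1 hi
    obtain ⟨w, he⟩ := hve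
    obtain ⟨g, hwg, rfl⟩ := mem_incidentCoords.1 (adjacentCoords_subset_incidentCoords he hj)
    refine h _ ⟨w, mem_roundTouch_inl.2 hwg, mem_closedNbhd_of_adj ?_⟩
    exact (G.mem_edgeSet).1 (he ▸ hA e e.2)
  simp only [conflictExcess, Set.mem_union, Set.mem_ofPred_eq, collisions_congr hI hJ,
    collisions_congr hI fun _ _ j hj => hI j (mem_of_mem_erase hj)]

variable [Fintype C] [MeasurableSpace (Option C)] [MeasurableSingletonClass (Option C)]

theorem measureReal_conflictExcess_le [∀ i, IsProbabilityMeasure (roundLaw A Λ coin i)]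
    (hA : ∀ e ∈ A, e ∈ G.edgeSet) (hβ₀ : 0 ≤ β) (hβ₁ : β ≤ 1)
    (hβ : ∀ v c, ∑ e ∈ A with v ∈ e ∧ c ∈ Λ e, (#(Λ e) : ℝ)⁻¹ ≤ β) (hδ₀ : 0 ≤ δ) (hδ₁ : δ ≤ 1)
    (v : V) : (Measure.pi (roundLaw A Λ coin)).real (conflictExcess G A β δ v) ≤
      2 * Real.exp (-δ ^ 2 * G.degree v / 32) := by
  have hI : (#(incidentCoords C A v) : ℝ) ≤ G.degree v :=
    mod_cast card_incidentCoords_le_degree hA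
  have hmass := sum_incidentCoords_roundLaw_le (coin := coin) hβ₀ hβ
  refine (measureReal_union_le _ _).trans ?_
  rw [two_mul]
  refine add_le_add (measureReal_add_mul_le_card_collisions_erase_le hI (hmass v) hδ₀ hδ₁) <|
    measureReal_add_mul_le_card_collisions_le hI
      (fun i _ => disjoint_adjacentCoords_incidentCoords i) (fun i hi y => ?_) hβ₁ (fun j => ?_)
      hδ₀ hδ₁
  · obtain ⟨e, ⟨w, he⟩, rfl⟩ := mem_incidentCoords.1 hi
    exact (sum_le_sum_of_subset_of_nonneg (adjacentCoords_subset_incidentCoords he)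
      fun _ _ _ => measureReal_nonneg).trans (hmass w y)
  · convert card_filter_mem_adjacentCoords_le_two j

end Conflicts

/-! ### Existence of a good round -/

section Round

variable {V C J : Type*} [Fintype V] [DecidableEq V] [DecidableEq C] [DecidableEq J]
  {G : SimpleGraph V} [DecidableRel G.Adj] {χ : Sym2 V → J} {Λ : Sym2 V → Finset C}
  {A : Finset (Sym2 V)} {β δ N : ℝ} {D : ℕ}

section

variable [Fintype C]

variable (G χ Λ A β δ) in
/-- A round with batch `A`, in which every colour is to survive at every vertex with probability
`1 - β`, goes wrong at `v`. -/
def roundFailure (v : V) : Set (A ⊕ V × C → Option C) :=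
  listLoss G Λ (roundTouch A) (1 - β) δ v ∪ degreeExcess G χ Λ (roundTouch A) (1 - β) δ v ∪
    conflictExcess G A β δ v

theorem dependsOn_roundFailure (hA : ∀ e ∈ A, e ∈ G.edgeSet) (v : V) :
    DependsOn (· ∈ roundFailure G χ Λ A β δ v)
      {i | ∃ w ∈ roundTouch A i, w ∈ closedNbhd G v} := fun ω ω' h => by
  have hlist := dependsOn_listLoss (Λ := Λ) (κ := 1 - β) (δ := δ) v h
  have hdegree := dependsOn_degreeExcess (χ := χ) (Λ := Λ) (κ := 1 - β) (δ := δ) v h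
  have hconflict := dependsOn_conflictExcess (β := β) (δ := δ) hA v h
  simp only [roundFailure, Set.mem_union, hlist, hdegree, hconflict]

section

variable [MeasurableSpace (Option C)] [MeasurableSingletonClass (Option C)]
  {coin : V × C → unitInterval} [∀ i, IsProbabilityMeasure (roundLaw A Λ coin i)]

theorem measureReal_setOf_notMem_blocked_roundLaw (hcoin : ∀ v c, (1 - coin (v, c)) *
      ∏ e ∈ A with v ∈ e ∧ c ∈ Λ e, (1 - (#(Λ e) : ℝ)⁻¹) = 1 - β) (v : V) (c : C) :
    (Measure.pi (roundLaw A Λ coin)).real {ω | c ∉ blocked (roundTouch A) ω v} = 1 - β := by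
  have h := measureReal_setOf_forall_notMem_blocked (touch := roundTouch A)
    (μ := roundLaw A Λ coin) {v} c
  rw [prod_one_sub_roundLaw, hcoin] at h
  simpa using h

/-- The probability that a round fails at a given vertex, for maximum degree `D`, `k` batches,
lists of size between `N` and `3 * D`, and minimum degree at least `N`. -/
noncomputable def failureBound (k D : ℕ) (δ N : ℝ) : ℝ :=
  (D + k * (D * (3 * D)) + 2) * Real.exp (-δ ^ 2 * N / 64)

theorem measureReal_roundFailure_le [Fintype J] (hA : ∀ e ∈ A, e ∈ G.edgeSet) (hβ₀ : 0 ≤ β)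
    (hβ₁ : β ≤ 1 / 2) (hδ₀ : 0 ≤ δ) (hδ₁ : δ ≤ 1)
    (hβ : ∀ v c, ∑ e ∈ A with v ∈ e ∧ c ∈ Λ e, (#(Λ e) : ℝ)⁻¹ ≤ β)
    (hcoinβ : ∀ vc, (coin vc : ℝ) ≤ β) (hcoin : ∀ v c, (1 - coin (v, c)) *
      ∏ e ∈ A with v ∈ e ∧ c ∈ Λ e, (1 - (#(Λ e) : ℝ)⁻¹) = 1 - β)
    (hD : ∀ v, G.degree v ≤ D) (hN : ∀ v, N ≤ G.degree v) (hNΛ : ∀ e ∈ G.edgeSet, N ≤ #(Λ e))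
    (hΛD : ∀ e ∈ G.edgeSet, #(Λ e) ≤ 3 * D) (v : V) :
    (Measure.pi (roundLaw A Λ coin)).real (roundFailure G χ Λ A β δ v) ≤
      failureBound (Fintype.card J) D δ N := by
  have hmass (v : V) (c : C) :
      ∑ i with v ∈ roundTouch A i, (roundLaw A Λ coin i).real {some c} ≤ 1 := by
    rw [sum_roundLaw]
    linarith [hβ v c, hcoinβ (v, c)]
  have hκ := measureReal_setOf_notMem_blocked_roundLaw hcoin
  have hexp : Real.exp (-δ ^ 2 * G.degree v / 32) ≤ Real.exp (-δ ^ 2 * N / 64) :=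
    Real.exp_le_exp.2 <| by
      nlinarith [mul_le_mul_of_nonneg_left (hN v) (sq_nonneg δ), sq_nonneg δ,
        (G.degree v).cast_nonneg (α := ℝ)]
  have hlist := measureReal_listLoss_le (μ := roundLaw A Λ coin) hκ hmass hδ₀ hδ₁ v
    fun x hx => hNΛ s(v, x) hx
  have hdegree := measureReal_degreeExcess_le (μ := roundLaw A Λ coin) (χ := χ) hκ hmass
    card_roundTouch_le_two hδ₀ hδ₁ v fun x hx => hΛD s(v, x) hx
  have hconflict := measureReal_conflictExcess_le (coin := coin) hA hβ₀ (by linarith) hβ hδ₀ hδ₁ v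
  have hDv : (G.degree v : ℝ) ≤ D := mod_cast hD v
  calc _ ≤ _ := (measureReal_union_le _ _).trans (by gcongr; exact measureReal_union_le _ _)
    _ ≤ _ := add_le_add_three hlist hdegree hconflict
    _ ≤ D * Real.exp (-δ ^ 2 * N / 64) +
        Fintype.card J * (D * (3 * D)) * Real.exp (-δ ^ 2 * N / 64) +
        2 * Real.exp (-δ ^ 2 * N / 64) := by
      push_cast
      gcongr
    _ = _ := by rw [failureBound]; ring

end

variable [Fintype J]

theorem exists_forall_notMem_roundFailure (hA : ∀ e ∈ A, e ∈ G.edgeSet)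
    (hΛ : ∀ e ∈ A, (Λ e).Nonempty) (hβ₀ : 0 ≤ β) (hβ₁ : β ≤ 1 / 2) (hδ₀ : 0 ≤ δ) (hδ₁ : δ ≤ 1)
    (hβ : ∀ v c, ∑ e ∈ A with v ∈ e ∧ c ∈ Λ e, (#(Λ e) : ℝ)⁻¹ ≤ β)
    (hD : ∀ v, G.degree v ≤ D) (hN : ∀ v, N ≤ G.degree v) (hNΛ : ∀ e ∈ G.edgeSet, N ≤ #(Λ e))
    (hΛD : ∀ e ∈ G.edgeSet, #(Λ e) ≤ 3 * D)
    (hsmall : 4 * failureBound (Fintype.card J) D δ N * (D + 1) ^ 3 ≤ 1) :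
    ∃ ω : A ⊕ V × C → Option C, (∀ e : A, ∃ c ∈ Λ e, ω (.inl e) = some c) ∧
      ∀ v, ω ∉ roundFailure G χ Λ A β δ v := by
  let : MeasurableSpace (Option C) := ⊤
  obtain ⟨coin, hcoinβ, hcoin⟩ := exists_equalizing_coin (by linarith) hβ
  have hprob : ∀ i, IsProbabilityMeasure (roundLaw A Λ coin i) :=
    isProbabilityMeasure_roundLaw hΛ
  let S (v : V) : Finset (A ⊕ V × C) := {i | ∃ w ∈ roundTouch A i, w ∈ closedNbhd G v}
  have hdisjoint (v u : V)
      (hu : u ∉ ((closedNbhd G v).biUnion (closedNbhd G)).biUnion (closedNbhd G)) :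
      Disjoint (S v) (S u) := by
    refine disjoint_filter.2 fun i _ => ?_
    rintro ⟨w, hwi, hwv⟩ ⟨w', hwi', hwu⟩
    refine hu (mem_biUnion.2 ⟨w', mem_biUnion.2 ⟨w, hwv, ?_⟩, mem_closedNbhd_comm.1 hwu⟩)
    exact mem_closedNbhd_of_mem_roundTouch hA hwi hwi'
  obtain ⟨ω, hω, hgood⟩ := exists_forall_singleton_ne_zero_forall_notMem
    (μ := roundLaw A Λ coin) (B := roundFailure G χ Λ A β δ)
    (S := S) (d := (D + 1) ^ 3) (fun v => by simpa [S] using dependsOn_roundFailure hA v)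
    (measureReal_roundFailure_le hA hβ₀ hβ₁ hδ₀ hδ₁ hβ hcoinβ hcoin hD hN hNΛ hΛD)
    (one_le_pow₀ (by norm_cast; omega)) _ hdisjoint
    (fun v => mod_cast card_biUnion_biUnion_closedNbhd_le hD v) hsmall
  refine ⟨ω, fun e => ?_, hgood⟩
  have hpos : (roundLaw A Λ coin (.inl e)).real {ω (.inl e)} ≠ 0 :=
    (measureReal_ne_zero_iff (by finiteness)).2 (hω _)
  rw [roundLaw_inl_real_singleton] at hpos
  simpa [eq_comm] using (ite_ne_right_iff.1 hpos).1

end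

/-- The colours of the list `Λ e` that are not used at either end of `e`, the colours used at `v`
being `U v`. -/
def remaining (Λ : Sym2 V → Finset C) (U : V → Finset C) (e : Sym2 V) : Finset C :=
  {c ∈ Λ e | ∀ v ∈ e, c ∉ U v}

theorem exists_round [Fintype J] [Finite C] [Nonempty C] (hA : ∀ e ∈ A, e ∈ G.edgeSet)
    (hΛ : ∀ e ∈ A, (Λ e).Nonempty) (hβ₀ : 0 ≤ β) (hβ₁ : β ≤ 1 / 2) (hδ₀ : 0 ≤ δ) (hδ₁ : δ ≤ 1)
    (hβ : ∀ v c, ∑ e ∈ A with v ∈ e ∧ c ∈ Λ e, (#(Λ e) : ℝ)⁻¹ ≤ β)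
    (hD : ∀ v, G.degree v ≤ D) (hN : ∀ v, N ≤ G.degree v) (hNΛ : ∀ e ∈ G.edgeSet, N ≤ #(Λ e))
    (hΛD : ∀ e ∈ G.edgeSet, #(Λ e) ≤ 3 * D)
    (hsmall : 4 * failureBound (Fintype.card J) D δ N * (D + 1) ^ 3 ≤ 1) :
    ∃ (col : Sym2 V → C) (K : V → Finset C), (∀ e ∈ A, col e ∈ Λ e ∧ ∀ v ∈ e, col e ∈ K v) ∧
      (∀ e ∈ G.edgeSet, ((1 - β) ^ 2 - δ) * #(Λ e) ≤ #(remaining Λ K e)) ∧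
      (∀ v j c, #{x ∈ colourNbrs G χ Λ v j c | c ∉ K x} ≤
        (1 - β) * #(colourNbrs G χ Λ v j c) + δ * G.degree v) ∧
      ∀ v, #{e ∈ conflicting A col | v ∈ e} ≤
        2 * β * #{e ∈ A | v ∈ e} + 2 * δ * G.degree v := by
  cases nonempty_fintype C
  obtain ⟨ω, hω, hgood⟩ := exists_forall_notMem_roundFailure (χ := χ) hA hΛ hβ₀ hβ₁ hδ₀ hδ₁ hβ
    hD hN hNΛ hΛD hsmall
  choose pick hpick hωpick using hω
  obtain ⟨col, hcol⟩ : ∃ col : Sym2 V → C, ∀ e : A, col e = pick e :=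
    ⟨fun e => if he : e ∈ A then pick ⟨e, he⟩ else Classical.arbitrary C, fun e => dif_pos e.2⟩
  simp only [← hcol] at hpick hωpick
  simp only [roundFailure, Set.mem_union, not_or, listLoss, degreeExcess, conflictExcess,
    Set.mem_ofPred_eq, not_exists, not_and, not_lt, not_le] at hgood
  refine ⟨col, blocked (roundTouch A) ω, fun e he => ⟨hpick ⟨e, he⟩, fun v hv => ?_⟩, ?_, ?_,
    fun v => ?_⟩
  · exact mem_blocked.2 ⟨.inl ⟨e, he⟩, mem_roundTouch_inl.2 hv, hωpick ⟨e, he⟩⟩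
  · rintro ⟨v, x⟩ (he : G.Adj v x)
    have h := (hgood v).1.1 x (by simpa using he)
    simpa [remaining] using h
  · intro v j c
    by_cases hc : c ∈ (G.neighborFinset v).biUnion fun x => Λ s(v, x)
    · exact (hgood v).1.2 j c hc
    · have hempty : colourNbrs G χ Λ v j c = ∅ := filter_eq_empty_iff.2 fun x hx hxc =>
        hc (mem_biUnion.2 ⟨x, hx, hxc.2⟩)
      simp only [hempty, filter_empty, card_empty, Nat.cast_zero, mul_zero, zero_add]
      positivity
  · obtain ⟨hnear, hfar⟩ := (hgood v).2
    rw [card_incidentCoords] at hnear hfar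
    have hcard := Nat.cast_le (α := ℝ).2 (card_filter_mem_conflicting_le hωpick v)
    push_cast at hcard
    linarith

end Round

/-! ### Splitting the edges into batches -/

section BatchSplit

theorem measureReal_mul_add_lt_card_filter_eq_le {ι J : Type*} [Fintype ι] [Finite J]
    [DecidableEq J] [MeasurableSpace J] [MeasurableSingletonClass J] {μ : ι → Measure J}
    [∀ i, IsProbabilityMeasure (μ i)] {p δ : ℝ} (j : J) (hp : ∀ i, (μ i).real {j} = p)
    (hδ₀ : 0 ≤ δ) (hδ₁ : δ ≤ 1) (s : Finset ι) :
    (Measure.pi μ).real {ω | (p + δ) * #s < #{i ∈ s | ω i = j}} ≤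
      Real.exp (-δ ^ 2 * #s / 32) := by
  classical
  let R (k i : ι) : Set J := if i = k then {j} else ∅
  have hhit (ω : ι → J) (k : ι) : (∃ i, ω i ∈ R k i) ↔ ω k = j := by
    simp [R]
  have hsum (k : ι) : ∑ i, (μ i).real (R k i) = p := by
    rw [sum_eq_single k (fun i _ hik => by simp [R, hik]) (by simp)]
    simp [R, hp]
  have hprob (k : ι) : (Measure.pi μ).real {ω | ∃ i, ω i ∈ R k i} ≤ p := by
    simpa [R, hsum] using measureReal_setOf_exists_mem_le (μ := μ) univ (R k)
  have hp₁ : ∑ k ∈ s, ∑ i, (μ i).real (R k i) ≤ #s := by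
    rw [← nsmul_one]
    exact sum_le_card_nsmul _ _ _ fun k _ => by rw [hsum, ← hp k]; exact measureReal_le_one
  refine (measureReal_mono (fun ω hω => ?_)).trans <|
    measureReal_add_mul_le_mul_hitCount_le (τ := 1) (m := p * #s) s R (by simp) hδ₀ hδ₁
      (fun i y => ?_) hp₁ ?_
  · simp only [hitCount, hhit, Set.mem_ofPred_eq, one_mul, ← add_mul] at hω ⊢
    exact hω.le
  · refine (card_le_one.2 fun k hk k' hk' => ?_).trans one_le_two
    simp only [R, mem_filter, Set.mem_ite_empty_right] at hk hk'
    exact hk.2.1.symm.trans hk'.2.1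
  · rw [one_mul, mul_comm, ← nsmul_eq_mul]
    exact sum_le_card_nsmul _ _ _ fun k _ => hprob k

variable {V J : Type*} [Fintype V] [DecidableEq V] (G : SimpleGraph V) [DecidableRel G.Adj]

theorem card_filter_incidenceFinset (p : Sym2 V → Prop) [DecidablePred p] (v : V) :
    #{e ∈ G.incidenceFinset v | p e} = #{x ∈ G.neighborFinset v | p s(v, x)} := by
  refine (card_nbij (s(v, ·)) (fun x hx => ?_) (fun x _ y _ h => Sym2.congr_right.1 h)
    fun e he => ?_).symm
  · simpa [SimpleGraph.incidenceSet] using hx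
  · simp only [coe_filter, SimpleGraph.mem_incidenceFinset, Set.mem_ofPred_eq] at he
    obtain ⟨⟨he, x, rfl⟩, hp⟩ := he
    exact ⟨x, by simpa using ⟨he, hp⟩, rfl⟩

variable {G}

theorem disjoint_incidenceFinset_of_notMem_closedNbhd {v u : V} (hu : u ∉ closedNbhd G v) :
    Disjoint (G.incidenceFinset v) (G.incidenceFinset u) :=
  disjoint_left.2 fun e hv hu' => hu <| by
    rw [SimpleGraph.mem_incidenceFinset] at hv hu'
    exact mem_closedNbhd_of_mem_edge hv.1 hv.2 hu'.2

theorem exists_forall_card_filter_incidenceFinset_le [Fintype J] [DecidableEq J] [Nonempty J]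
    {δ N : ℝ} {D : ℕ} (hδ₀ : 0 ≤ δ) (hδ₁ : δ ≤ 1) (hD : ∀ v, G.degree v ≤ D)
    (hN : ∀ v, N ≤ G.degree v)
    (hsmall : 4 * (Fintype.card J * Real.exp (-δ ^ 2 * N / 32)) * (D + 1) ≤ 1) :
    ∃ χ : Sym2 V → J, ∀ v j,
      #{e ∈ G.incidenceFinset v | χ e = j} ≤ ((Fintype.card J : ℝ)⁻¹ + δ) * G.degree v := by
  let : MeasurableSpace J := ⊤
  let μ (_ : Sym2 V) : Measure J := uniformOn Set.univ
  have (e : Sym2 V) : IsProbabilityMeasure (μ e) :=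
    isProbabilityMeasure_uniformOn Set.finite_univ Set.univ_nonempty
  have hμ (e : Sym2 V) (j : J) : (μ e).real {j} = (Fintype.card J : ℝ)⁻¹ := by
    simp [μ, measureReal_def, uniformOn_univ]
  let B (v : V) : Set (Sym2 V → J) := ⋃ j, {χ | ((Fintype.card J : ℝ)⁻¹ + δ) *
    #(G.incidenceFinset v) < #{e ∈ G.incidenceFinset v | χ e = j}}
  have hdep (v : V) : DependsOn (· ∈ B v) (G.incidenceFinset v) := fun χ χ' h => by
    simp only [B, Set.mem_iUnion, Set.mem_ofPred_eq]
    refine propext <| exists_congr fun j => ?_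
    rw [filter_congr fun e he => by rw [h e he]]
  have hB (v : V) :
      (Measure.pi μ).real (B v) ≤ Fintype.card J * Real.exp (-δ ^ 2 * N / 32) := by
    refine (measureReal_iUnion_fintype_le _).trans ?_
    rw [← nsmul_eq_mul, ← card_univ]
    refine sum_le_card_nsmul _ _ _ fun j _ => (measureReal_mul_add_lt_card_filter_eq_le j
      (hμ · j) hδ₀ hδ₁ _).trans <| Real.exp_le_exp.2 ?_
    rw [G.card_incidenceFinset_eq_degree]
    linarith [mul_le_mul_of_nonneg_left (hN v) (sq_nonneg δ)]
  have hcard (v : V) : (#(closedNbhd G v) : ℝ) ≤ D + 1 := by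
    have h := card_biUnion_closedNbhd_le hD {v}
    rw [singleton_biUnion, card_singleton, one_mul] at h
    exact mod_cast h
  obtain ⟨χ, -, hχ⟩ := exists_forall_singleton_ne_zero_forall_notMem hdep hB
    (by linarith [D.cast_nonneg (α := ℝ)]) (closedNbhd G)
    (fun v u => disjoint_incidenceFinset_of_notMem_closedNbhd) hcard hsmall
  refine ⟨χ, fun v j => ?_⟩
  have h := hχ v
  simp only [B, Set.mem_iUnion, Set.mem_ofPred_eq, not_exists, not_lt] at h
  simpa only [G.card_incidenceFinset_eq_degree] using h j

end BatchSplit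

section Greedy

theorem exists_forall_mem_and_pairwise_ne_of_card_lt {E C : Type*} [Nonempty C] {r : E → E → Prop}
    [DecidableRel r] [Std.Symm r] {Λ : E → Finset C} {F : Finset E}
    (hF : ∀ e ∈ F, #{f ∈ F | r e f} < #(Λ e)) :
    ∃ γ : E → C, (∀ e ∈ F, γ e ∈ Λ e) ∧
      (F : Set E).Pairwise fun e f => r e f → γ e ≠ γ f := by
  classical
  induction F using Finset.induction_on with
  | empty => exact ⟨fun _ => Classical.arbitrary C, by simp, by simp⟩
  | insert a F ha ih =>
    have hmono (e : E) : #{f ∈ F | r e f} ≤ #{f ∈ insert a F | r e f} :=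
      card_le_card <| filter_subset_filter _ (subset_insert a F)
    obtain ⟨γ, hγ, hpair⟩ := ih fun e he => (hmono e).trans_lt (hF e (mem_insert_of_mem he))
    obtain ⟨c, hcΛ, hc⟩ := exists_mem_notMem_of_card_lt_card <|
      card_image_le.trans_lt <| (hmono a).trans_lt (hF a (mem_insert_self a F))
    have hne {e : E} (he : e ∈ F) : e ≠ a := ne_of_mem_of_not_mem he ha
    refine ⟨update γ a c, forall_mem_insert _ _ _ |>.2
      ⟨by simpa using hcΛ, fun e he => by simpa [hne he] using hγ e he⟩, ?_⟩
    have : Std.Symm fun e f => r e f → update γ a c e ≠ update γ a c f :=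
      ⟨fun e f h hfe => (h (symm hfe)).symm⟩
    rw [coe_insert, Set.pairwise_insert_of_symm_of_notMem (by simpa using ha)]
    refine ⟨fun e he f hf hef => ?_, fun f hf haf => ?_⟩
    · simpa [hne he, hne hf] using hpair he hf hef
    · rw [update_self, update_of_ne (hne hf)]
      rintro rfl
      exact hc (mem_image_of_mem γ (mem_filter.2 ⟨hf, haf⟩))

end Greedy

/-! ### Iterating the rounds -/

section ListColouring

variable {V C : Type*}

/-- `γ` colours the edges in `S` from the lists `L`, with different colours on adjacent edges. -/
def IsListEdgeColouringOn (S : Set (Sym2 V)) (L : Sym2 V → Finset C) (γ : Sym2 V → C) : Prop :=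
  (∀ e ∈ S, γ e ∈ L e) ∧ ∀ e ∈ S, ∀ f ∈ S, e ≠ f → (∃ v, v ∈ e ∧ v ∈ f) → γ e ≠ γ f

variable {S T : Set (Sym2 V)} {L : Sym2 V → Finset C} {γ γ' : Sym2 V → C}

theorem IsListEdgeColouringOn.mono (h : IsListEdgeColouringOn S L γ) (hTS : T ⊆ S) :
    IsListEdgeColouringOn T L γ :=
  ⟨fun e he => h.1 e (hTS he), fun e he f hf => h.2 e (hTS he) f (hTS hf)⟩

variable [Fintype V] [DecidableEq V] [DecidableEq C] {U K : V → Finset C} {e : Sym2 V}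

theorem mem_remaining {c : C} : c ∈ remaining L U e ↔ c ∈ L e ∧ ∀ v ∈ e, c ∉ U v := mem_filter

theorem remaining_subset : remaining L U e ⊆ L e := filter_subset _ _

theorem remaining_sup : remaining L (U ⊔ K) = remaining (remaining L U) K := by
  ext e c
  simp [mem_remaining, and_assoc, forall_and]

theorem IsListEdgeColouringOn.piecewise [DecidablePred (· ∈ T)] (h : IsListEdgeColouringOn S L γ)
    (hU : ∀ e ∈ S, ∀ v ∈ e, γ e ∈ U v) (h' : IsListEdgeColouringOn T (remaining L U) γ') :
    IsListEdgeColouringOn (S ∪ T) L (T.piecewise γ' γ) := by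
  have hne {e f : Sym2 V} (he : e ∈ T) (hf : f ∈ S) (hef : ∃ v, v ∈ e ∧ v ∈ f) : γ' e ≠ γ f := by
    obtain ⟨v, hve, hvf⟩ := hef
    exact fun heq => (mem_remaining.1 (h'.1 e he)).2 v hve (heq ▸ hU f hf v hvf)
  refine ⟨fun e he => ?_, fun e he f hf hef hmeet => ?_⟩
  · by_cases heT : e ∈ T
    · simpa [heT] using remaining_subset (h'.1 e heT)
    · simpa [heT] using h.1 e (he.resolve_right heT)
  · by_cases heT : e ∈ T <;> by_cases hfT : f ∈ T <;>
      simp only [heT, hfT, Set.piecewise_eq_of_mem, Set.piecewise_eq_of_notMem, not_false_eq_true]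
    · exact h'.2 e heT f hfT hef hmeet
    · exact hne heT (hf.resolve_right hfT) hmeet
    · exact (hne hfT (he.resolve_right heT) (hmeet.imp fun _ => And.symm)).symm
    · exact h.2 e (he.resolve_right heT) f (hf.resolve_right hfT) hef hmeet

theorem isListEdgeColouringOn_sdiff_conflicting {A : Finset (Sym2 V)} (hγ : ∀ e ∈ A, γ e ∈ L e) :
    IsListEdgeColouringOn (A \ conflicting A γ : Finset (Sym2 V)) L γ := by
  simp only [IsListEdgeColouringOn, coe_sdiff, Set.mem_sdiff, mem_coe]
  refine ⟨fun e he => hγ e he.1, fun e he f hf hef hmeet heq => he.2 ?_⟩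
  exact mem_filter.2 ⟨he.1, f, hf.1, hef.symm, hmeet, heq.symm⟩

end ListColouring

theorem degree_pos_of_mem_edge {V : Type*} [Fintype V] {G : SimpleGraph V} [DecidableRel G.Adj]
    {e : Sym2 V} {v : V} (he : e ∈ G.edgeSet) (hv : v ∈ e) : 0 < G.degree v := by
  obtain ⟨x, rfl⟩ := hv
  exact (G.degree_pos_iff_exists_adj v).2 ⟨x, he⟩

section Batch

variable {V C J : Type*} [Fintype V] [DecidableEq J] {G : SimpleGraph V} [DecidableRel G.Adj]
  {χ : Sym2 V → J} {Λ : Sym2 V → Finset C} {j : J} {v : V}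

variable (G χ j) in
/-- The edges of the class `j`. -/
def batch : Finset (Sym2 V) := {e ∈ G.edgeFinset | χ e = j}

theorem mem_batch {e : Sym2 V} : e ∈ batch G χ j ↔ e ∈ G.edgeSet ∧ χ e = j := by
  simp [batch]

variable [DecidableEq V]

theorem filter_mem_batch : {e ∈ batch G χ j | v ∈ e} = {e ∈ G.incidenceFinset v | χ e = j} := by
  rw [batch, filter_comm, G.incidenceFinset_eq_filter]

variable [DecidableEq C]

theorem card_filter_batch (c : C) :
    #{e ∈ batch G χ j | v ∈ e ∧ c ∈ Λ e} = #(colourNbrs G χ Λ v j c) := by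
  rw [← filter_filter, filter_mem_batch, filter_filter,
    card_filter_incidenceFinset G fun e => χ e = j ∧ c ∈ Λ e, colourNbrs]

theorem colourNbrs_remaining_sup_subset {L : Sym2 V → Finset C} {U K : V → Finset C} {c : C} :
    colourNbrs G χ (remaining L (U ⊔ K)) v j c ⊆
      {x ∈ colourNbrs G χ (remaining L U) v j c | c ∉ K x} := fun x hx => by
  simp only [colourNbrs, remaining_sup, mem_filter] at hx ⊢
  obtain ⟨hc, hcK⟩ := mem_remaining.1 hx.2.2
  exact ⟨⟨hx.1, hx.2.1, hc⟩, hcK x (Sym2.mem_mk_right v x)⟩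

theorem sum_batch_inv_card_le {a b β : ℝ} (ha : 0 < a) (hβ : 0 ≤ β) (hab : b ≤ β * a)
    (hΛ : ∀ e ∈ G.edgeSet, ∀ v ∈ e, a * G.degree v ≤ #(Λ e)) {c : C}
    (hb : #(colourNbrs G χ Λ v j c) ≤ b * G.degree v) :
    ∑ e ∈ batch G χ j with v ∈ e ∧ c ∈ Λ e, (#(Λ e) : ℝ)⁻¹ ≤ β := by
  calc ∑ e ∈ batch G χ j with v ∈ e ∧ c ∈ Λ e, (#(Λ e) : ℝ)⁻¹
      ≤ #(colourNbrs G χ Λ v j c) • (a * G.degree v)⁻¹ := by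
        rw [← card_filter_batch]
        refine sum_le_card_nsmul _ _ _ fun e he => ?_
        obtain ⟨he, hv, -⟩ := mem_filter.1 he
        have hpos : (0 : ℝ) < G.degree v := mod_cast degree_pos_of_mem_edge (mem_batch.1 he).1 hv
        exact inv_anti₀ (by positivity) (hΛ e (mem_batch.1 he).1 v hv)
    _ ≤ β * (a * G.degree v) * (a * G.degree v)⁻¹ := by
        rw [nsmul_eq_mul, ← mul_assoc]
        gcongr
        exact hb.trans (by gcongr)
    _ ≤ β := by
        rw [mul_assoc]
        exact mul_le_of_le_one_right hβ mul_inv_le_one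

end Batch

section Nibble

variable {V C : Type*} [Fintype V] [DecidableEq V] [DecidableEq C] {G : SimpleGraph V}
  [DecidableRel G.Adj] {k : ℕ} {L : Sym2 V → Finset C} {χ : Sym2 V → Fin k}

variable (G L χ) in
/-- The state of the construction when the batches `j < t` have been treated: `γ` colours their
edges from the lists `L`, except for the set `F` of deferred edges, and `U v` contains the colours
used at `v`. Relative to the degrees, the remaining lists have size at least `a`, the colour degrees
in the other batches are at most `b`, and the degrees in `F` are at most `φ`. -/
structure NibbleState (t : ℕ) (a b φ : ℝ) (U : V → Finset C) (F : Finset (Sym2 V))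
    (γ : Sym2 V → C) : Prop where
  isListEdgeColouringOn : IsListEdgeColouringOn {e ∈ G.edgeSet | (χ e : ℕ) < t ∧ e ∉ F} L γ
  mem_used : ∀ e ∈ {e ∈ G.edgeSet | (χ e : ℕ) < t ∧ e ∉ F}, ∀ v ∈ e, γ e ∈ U v
  deferred_subset : F ⊆ G.edgeFinset
  le_card_remaining : ∀ e ∈ G.edgeSet, ∀ v ∈ e, a * G.degree v ≤ #(remaining L U e)
  card_colourNbrs_le : ∀ v (j : Fin k) c, t ≤ j →
    #(colourNbrs G χ (remaining L U) v j c) ≤ b * G.degree v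
  card_deferred_le : ∀ v, #{e ∈ F | v ∈ e} ≤ φ * G.degree v

/-- The parameters of `NibbleState` over the rounds: in round `t` each colour is lost at each vertex
with probability `β t`, all deviations are at most `δ`, and `α` bounds the list sizes from
below. -/
structure IsNibbleSchedule (k : ℕ) (α δ : ℝ) (a b φ β : ℕ → ℝ) : Prop where
  α_pos : 0 < α
  α_le_one : α ≤ 1
  δ_pos : 0 < δ
  δ_le_one : δ ≤ 1
  le_a : ∀ t < k, α ≤ a t
  b_zero : (k : ℝ)⁻¹ + δ ≤ b 0
  φ_zero : 0 ≤ φ 0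
  β_nonneg : ∀ t < k, 0 ≤ β t
  β_le_half : ∀ t < k, β t ≤ 1 / 2
  δ_le_sq : ∀ t < k, δ ≤ (1 - β t) ^ 2
  b_le : ∀ t < k, b t ≤ β t * a t
  a_succ : ∀ t < k, a (t + 1) ≤ ((1 - β t) ^ 2 - δ) * a t
  b_succ : ∀ t < k, (1 - β t) * b t + δ ≤ b (t + 1)
  φ_succ : ∀ t < k, φ t + 2 * β t * ((k : ℝ)⁻¹ + δ) + 2 * δ ≤ φ (t + 1)
  φ_lt : 2 * φ k < a k

namespace NibbleState

variable {a b φ : ℝ} {U : V → Finset C} {F : Finset (Sym2 V)} {γ : Sym2 V → C}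

theorem exists_isListEdgeColouringOn [Nonempty C] (h : NibbleState G L χ k a b φ U F γ)
    (hφ : 2 * φ < a) : ∃ γ, IsListEdgeColouringOn G.edgeSet L γ := by
  have hF {e : Sym2 V} (he : e ∈ F) : e ∈ G.edgeSet := G.mem_edgeFinset.1 (h.deferred_subset he)
  have hcard (e) (he : e ∈ F) : #{f ∈ F | ∃ v, v ∈ e ∧ v ∈ f} < #(remaining L U e) := by
    induction e with | _ u v =>
    have hunion : #{f ∈ F | ∃ w, w ∈ s(u, v) ∧ w ∈ f} ≤ #{f ∈ F | u ∈ f} + #{f ∈ F | v ∈ f} := by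
      simpa [or_and_right, exists_or, filter_or] using card_union_le _ _
    have hu := h.le_card_remaining _ (hF he) u (Sym2.mem_mk_left u v)
    have hv := h.le_card_remaining _ (hF he) v (Sym2.mem_mk_right u v)
    have hpos : (0 : ℝ) < G.degree u + G.degree v := mod_cast Nat.add_pos_left
      (degree_pos_of_mem_edge (hF he) (Sym2.mem_mk_left u v)) _
    rw [← Nat.cast_lt (α := ℝ)]
    have hunion' := Nat.cast_le (α := ℝ).2 hunion
    push_cast at hunion'
    nlinarith [h.card_deferred_le u, h.card_deferred_le v]
  have : Std.Symm fun e f : Sym2 V => ∃ v, v ∈ e ∧ v ∈ f := ⟨fun e f => .imp fun _ => .symm⟩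
  obtain ⟨γF, hγF, hpair⟩ := exists_forall_mem_and_pairwise_ne_of_card_lt hcard
  refine ⟨_, (h.isListEdgeColouringOn.piecewise (T := F) h.mem_used
    ⟨hγF, fun e he f hf => hpair he hf⟩).mono fun e he => ?_⟩
  by_cases heF : e ∈ F
  · exact .inr heF
  · exact .inl ⟨he, (χ e).2, heF⟩

theorem colouredEdges_subset {t : Fin k} (T : Finset (Sym2 V)) :
    {e ∈ G.edgeSet | (χ e : ℕ) < t + 1 ∧ e ∉ F ∪ T} ⊆
      {e ∈ G.edgeSet | (χ e : ℕ) < t ∧ e ∉ F} ∪ (batch G χ t \ T : Finset (Sym2 V)) := by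
  rintro e ⟨he, hχ, hF⟩
  rw [mem_union, not_or] at hF
  obtain hχ | hχ := (Nat.lt_succ_iff.1 hχ).lt_or_eq
  · exact .inl ⟨he, hχ, hF.1⟩
  · exact .inr <| mem_coe.2 <| mem_sdiff.2 ⟨mem_batch.2 ⟨he, Fin.ext hχ⟩, hF.2⟩

variable {t : Fin k} {a' b' φ' β δ ρ : ℝ}

theorem mem_sup_used {T : Finset (Sym2 V)} {col : Sym2 V → C} {K : V → Finset C} {e : Sym2 V}
    {v : V} (h : NibbleState G L χ t a b φ U F γ) (hcol : ∀ e ∈ batch G χ t, ∀ v ∈ e, col e ∈ K v)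
    (he : e ∈ {e ∈ G.edgeSet | (χ e : ℕ) < t + 1 ∧ e ∉ F ∪ T}) (hv : v ∈ e) :
    ((batch G χ t \ T : Finset _) : Set _).piecewise col γ e ∈ (U ⊔ K) v := by
  by_cases heT : e ∈ ((batch G χ t \ T : Finset _) : Set (Sym2 V))
  · rw [Set.piecewise_eq_of_mem _ _ _ heT]
    exact mem_union_right _ (hcol e (mem_sdiff.1 heT).1 v hv)
  · rw [Set.piecewise_eq_of_notMem _ _ _ heT]
    exact mem_union_left _ (h.mem_used e ((colouredEdges_subset _ he).resolve_right heT) v hv)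

theorem card_filter_union_le {T : Finset (Sym2 V)} {v : V} (h : NibbleState G L χ t a b φ U F γ)
    (hT : #{e ∈ T | v ∈ e} ≤ 2 * β * #{e ∈ batch G χ t | v ∈ e} + 2 * δ * G.degree v)
    (hβ₀ : 0 ≤ β) (hρ : #{e ∈ batch G χ t | v ∈ e} ≤ ρ * G.degree v) :
    #{e ∈ F ∪ T | v ∈ e} ≤ (φ + 2 * β * ρ + 2 * δ) * G.degree v :=
  calc (#{e ∈ F ∪ T | v ∈ e} : ℝ) ≤ #{e ∈ F | v ∈ e} + #{e ∈ T | v ∈ e} := by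
        rw [filter_union]
        exact mod_cast card_union_le _ _
    _ ≤ φ * G.degree v + (2 * β * (ρ * G.degree v) + 2 * δ * G.degree v) := by
        gcongr
        · exact h.card_deferred_le v
        · exact hT.trans (by gcongr)
    _ = (φ + 2 * β * ρ + 2 * δ) * G.degree v := by ring

theorem succ {col : Sym2 V → C} {K : V → Finset C} (h : NibbleState G L χ t a b φ U F γ)
    (hcol : ∀ e ∈ batch G χ t, col e ∈ remaining L U e ∧ ∀ v ∈ e, col e ∈ K v)
    (hlists : ∀ e ∈ G.edgeSet,
      ((1 - β) ^ 2 - δ) * #(remaining L U e) ≤ #(remaining (remaining L U) K e))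
    (hdegrees : ∀ v j c, #{x ∈ colourNbrs G χ (remaining L U) v j c | c ∉ K x} ≤
      (1 - β) * #(colourNbrs G χ (remaining L U) v j c) + δ * G.degree v)
    (hconflicts : ∀ v, #{e ∈ conflicting (batch G χ t) col | v ∈ e} ≤
      2 * β * #{e ∈ batch G χ t | v ∈ e} + 2 * δ * G.degree v)
    (hβ₀ : 0 ≤ β) (hβ₁ : β ≤ 1) (hδβ : δ ≤ (1 - β) ^ 2)
    (hρ : ∀ v, #{e ∈ batch G χ t | v ∈ e} ≤ ρ * G.degree v)
    (ha' : a' ≤ ((1 - β) ^ 2 - δ) * a) (hb' : (1 - β) * b + δ ≤ b')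
    (hφ' : φ + 2 * β * ρ + 2 * δ ≤ φ') :
    NibbleState G L χ (t + 1) a' b' φ' (U ⊔ K) (F ∪ conflicting (batch G χ t) col)
      (((batch G χ t \ conflicting (batch G χ t) col : Finset _) : Set _).piecewise col γ) := by
  have hT := isListEdgeColouringOn_sdiff_conflicting fun e he => (hcol e he).1
  refine ⟨(h.isListEdgeColouringOn.piecewise h.mem_used hT).mono (colouredEdges_subset _),
    fun e he v hv => h.mem_sup_used (fun e he => (hcol e he).2) he hv,
    union_subset h.deferred_subset fun e he => ?_, fun e he v hv => ?_, fun v j c hj => ?_,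
    fun v => ?_⟩
  · exact G.mem_edgeFinset.2 (mem_batch.1 (mem_filter.1 he).1).1
  · calc a' * G.degree v ≤ ((1 - β) ^ 2 - δ) * a * G.degree v := by gcongr
      _ = ((1 - β) ^ 2 - δ) * (a * G.degree v) := mul_assoc ..
      _ ≤ ((1 - β) ^ 2 - δ) * #(remaining L U e) :=
        mul_le_mul_of_nonneg_left (h.le_card_remaining e he v hv) (sub_nonneg.2 hδβ)
      _ ≤ _ := by rw [remaining_sup]; exact hlists e he
  · have hb := h.card_colourNbrs_le v j c (by omega)
    calc (#(colourNbrs G χ (remaining L (U ⊔ K)) v j c) : ℝ)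
        ≤ (1 - β) * #(colourNbrs G χ (remaining L U) v j c) + δ * G.degree v :=
          (Nat.cast_le.2 (card_le_card colourNbrs_remaining_sup_subset)).trans (hdegrees v j c)
      _ ≤ (1 - β) * (b * G.degree v) + δ * G.degree v := by
          have := sub_nonneg.2 hβ₁
          gcongr
      _ = ((1 - β) * b + δ) * G.degree v := by ring
      _ ≤ b' * G.degree v := by gcongr
  · exact (h.card_filter_union_le (hconflicts v) hβ₀ (hρ v)).trans (by gcongr)

end NibbleState

namespace IsNibbleSchedule

variable [Finite C] [Nonempty C] {α δ d : ℝ} {a b φ β : ℕ → ℝ} {D : ℕ}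

theorem exists_nibbleState_succ (h : IsNibbleSchedule k α δ a b φ β) {t : Fin k}
    {U : V → Finset C} {F : Finset (Sym2 V)} {γ : Sym2 V → C}
    (hs : NibbleState G L χ t (a t) (b t) (φ t) U F γ)
    (hχ : ∀ v, #{e ∈ batch G χ t | v ∈ e} ≤ ((k : ℝ)⁻¹ + δ) * G.degree v)
    (hD : ∀ v, G.degree v ≤ D) (hd₀ : 0 ≤ d) (hd : ∀ v, d ≤ G.degree v)
    (hLD : ∀ e ∈ G.edgeSet, #(L e) ≤ 3 * D)
    (hsmall : 4 * failureBound k D δ (α * d) * (D + 1) ^ 3 ≤ 1) :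
    ∃ U F γ, NibbleState G L χ (t + 1) (a (t + 1)) (b (t + 1)) (φ (t + 1)) U F γ := by
  have hedge {e : Sym2 V} (he : e ∈ batch G χ t) : e ∈ G.edgeSet := (mem_batch.1 he).1
  have ha : 0 < a t := h.α_pos.trans_le (h.le_a t t.2)
  have hβ₁ := h.β_le_half t t.2
  have hnonempty (e) (he : e ∈ batch G χ t) : (remaining L U e).Nonempty := by
    induction e with | _ v x =>
    have hv := Sym2.mem_mk_left v x
    have hpos : (0 : ℝ) < G.degree v := mod_cast degree_pos_of_mem_edge (hedge he) hv
    exact card_pos.1 <| Nat.cast_pos.1 <|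
      (mul_pos ha hpos).trans_le (hs.le_card_remaining _ (hedge he) v hv)
  have hdL (e) (he : e ∈ G.edgeSet) : α * d ≤ #(remaining L U e) := by
    induction e with | _ v x =>
    exact (mul_le_mul (h.le_a t t.2) (hd v) hd₀ ha.le).trans
      (hs.le_card_remaining _ he v (Sym2.mem_mk_left v x))
  obtain ⟨col, K, hcol, hlists, hdegrees, hconflicts⟩ := exists_round (χ := χ) (N := α * d)
    (fun e he => hedge he) hnonempty (h.β_nonneg t t.2) hβ₁ h.δ_pos.le h.δ_le_one
    (fun v c => sum_batch_inv_card_le ha (h.β_nonneg t t.2) (h.b_le t t.2) hs.le_card_remaining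
      (hs.card_colourNbrs_le v t c le_rfl))
    hD (fun v => (mul_le_of_le_one_left hd₀ h.α_le_one).trans (hd v)) hdL
    (fun e he => (card_le_card remaining_subset).trans (hLD e he)) (by simpa using hsmall)
  exact ⟨_, _, _, hs.succ hcol hlists hdegrees hconflicts (h.β_nonneg t t.2) (by linarith)
    (h.δ_le_sq t t.2) hχ (h.a_succ t t.2) (h.b_succ t t.2) (h.φ_succ t t.2)⟩

theorem exists_nibbleState (h : IsNibbleSchedule k α δ a b φ β)
    (hχ : ∀ v j, #{e ∈ batch G χ j | v ∈ e} ≤ ((k : ℝ)⁻¹ + δ) * G.degree v)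
    (hD : ∀ v, G.degree v ≤ D) (hd₀ : 0 ≤ d) (hd : ∀ v, d ≤ G.degree v)
    (hL : ∀ e ∈ G.edgeSet, ∀ v ∈ e, a 0 * G.degree v ≤ #(L e))
    (hLD : ∀ e ∈ G.edgeSet, #(L e) ≤ 3 * D)
    (hsmall : 4 * failureBound k D δ (α * d) * (D + 1) ^ 3 ≤ 1) {t : ℕ} (ht : t ≤ k) :
    ∃ U F γ, NibbleState G L χ t (a t) (b t) (φ t) U F γ := by
  induction t with
  | zero =>
    refine ⟨⊥, ∅, fun _ => Classical.arbitrary C, by simp [IsListEdgeColouringOn], by simp,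
      empty_subset _, fun e he v hv => by simpa [remaining] using hL e he v hv,
      fun v j c _ => ?_, fun v => by simpa using mul_nonneg h.φ_zero (Nat.cast_nonneg _)⟩
    calc (#(colourNbrs G χ (remaining L ⊥) v j c) : ℝ) ≤ #{e ∈ batch G χ j | v ∈ e} := by
          rw [← card_filter_batch, ← filter_filter]
          exact mod_cast card_filter_le _ _
      _ ≤ b 0 * G.degree v := (hχ v j).trans (by gcongr; exact h.b_zero)
  | succ t ih =>
    obtain ⟨U, F, γ, hs⟩ := ih (by omega)
    exact h.exists_nibbleState_succ (t := ⟨t, ht⟩) hs (hχ · _) hD hd₀ hd hLD hsmall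

end IsNibbleSchedule

end Nibble

theorem IsNibbleSchedule.exists_isListEdgeColouringOn {V C : Type*} [Fintype V] [Finite C]
    [Nonempty C] {G : SimpleGraph V} [DecidableRel G.Adj] {L : Sym2 V → Finset C} {k D : ℕ}
    {α δ d : ℝ} {a b φ β : ℕ → ℝ} (h : IsNibbleSchedule k α δ a b φ β) (hk : 0 < k)
    (hD : ∀ v, G.degree v ≤ D) (hD₁ : 1 ≤ D) (hd₀ : 0 ≤ d) (hd : ∀ v, d ≤ G.degree v)
    (hL : ∀ e ∈ G.edgeSet, ∀ v ∈ e, a 0 * G.degree v ≤ #(L e))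
    (hLD : ∀ e ∈ G.edgeSet, #(L e) ≤ 3 * D)
    (hsmall : 4 * failureBound k D δ (α * d) * (D + 1) ^ 3 ≤ 1) :
    ∃ γ, IsListEdgeColouringOn G.edgeSet L γ := by
  classical
  have : NeZero k := ⟨hk.ne'⟩
  have hsplit : 4 * (k * Real.exp (-δ ^ 2 * d / 32)) * (D + 1) ≤ 1 := by
    have hD₁' : (1 : ℝ) ≤ D := mod_cast hD₁
    refine le_trans ?_ hsmall
    rw [failureBound]
    gcongr ?_ * (?_ * Real.exp ?_) * ?_
    · nlinarith [mul_nonneg k.cast_nonneg (sub_nonneg.2 (one_le_mul_of_one_le_of_one_le hD₁' hD₁'))]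
    · nlinarith [mul_nonneg (sq_nonneg δ) hd₀, mul_nonneg (sq_nonneg δ)
        (mul_nonneg hd₀ (sub_nonneg.2 h.α_le_one))]
    · exact le_self_pow₀ (by linarith) three_ne_zero
  obtain ⟨χ, hχ⟩ := exists_forall_card_filter_incidenceFinset_le (J := Fin k) h.δ_pos.le h.δ_le_one
    hD hd (by simpa using hsplit)
  simp only [← filter_mem_batch, Fintype.card_fin] at hχ
  obtain ⟨U, F, γ, hs⟩ := h.exists_nibbleState hχ hD hd₀ hd hL hLD hsmall le_rfl
  exact hs.exists_isListEdgeColouringOn h.φ_lt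

/-! ### The schedule -/

section Schedule

/-- The probability that a given colour is still available at a given vertex before round `t`, in an
ideal process that spends the same number of colours in each of the `k` rounds and leaves a
proportion `s` of all colours. -/
noncomputable def leftover (s : ℝ) (k t : ℕ) : ℝ := 1 - t * ((1 - s) / k)

/-- The probability that a colour which is available at a vertex before round `t` is lost there in
that round. -/
noncomputable def lossRate (s : ℝ) (k t : ℕ) : ℝ := (1 - s) / k / leftover s k t

/-- The deviation, relative to the degrees, allowed in each round. -/
noncomputable def errorRate (s : ℝ) (k : ℕ) : ℝ := s ^ 3 / (3 * k ^ 2)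

/-- A lower bound for the ratio of list sizes to degrees before round `t`: ideally a list keeps a
colour when both ends of the edge do, hence the square; the last factor absorbs the errors of
earlier rounds. The initial value is `1 + ε` for `s = ε / (2 + ε)`. -/
noncomputable def listRatio (s : ℝ) (k t : ℕ) : ℝ :=
  (1 + s) / (1 - s) * leftover s k t ^ 2 * (1 - t * (s / (3 * k)))

/-- An upper bound for the ratio of colour degrees to degrees before round `t`, within one batch. -/
noncomputable def colourRatio (s : ℝ) (k t : ℕ) : ℝ :=
  leftover s k t / k * (1 + (t + 1) * (s / (3 * k)))

/-- An upper bound for the proportion of deferred edges at a vertex before round `t`. -/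
noncomputable def deferredRatio (s : ℝ) (k t : ℕ) : ℝ := t * (4 / (k ^ 2 * s) + 2 * errorRate s k)

variable {s : ℝ} {k t : ℕ}

theorem leftover_succ : leftover s k (t + 1) = leftover s k t - (1 - s) / k := by
  rw [leftover, leftover]; push_cast; ring

theorem leftover_le_one (hs₁ : s ≤ 1) : leftover s k t ≤ 1 :=
  sub_le_self _ <| mul_nonneg t.cast_nonneg <| div_nonneg (sub_nonneg.2 hs₁) k.cast_nonneg

theorem le_leftover (hs₁ : s ≤ 1) (ht : t ≤ k) : s ≤ leftover s k t := by
  have htk : (t : ℝ) / k ≤ 1 := div_le_one_of_le₀ (mod_cast ht) k.cast_nonneg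
  have h := mul_le_mul_of_nonneg_right htk (sub_nonneg.2 hs₁)
  rw [leftover, mul_div_left_comm, mul_comm]
  linarith

theorem one_sub_lossRate (h : leftover s k t ≠ 0) :
    1 - lossRate s k t = leftover s k (t + 1) / leftover s k t := by
  rw [lossRate, leftover_succ, sub_div (leftover s k t), div_self h]

theorem lossRate_nonneg (hs₀ : 0 ≤ s) (hs₁ : s ≤ 1) (ht : t ≤ k) : 0 ≤ lossRate s k t :=
  div_nonneg (div_nonneg (sub_nonneg.2 hs₁) k.cast_nonneg) (hs₀.trans (le_leftover hs₁ ht))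

theorem lossRate_le (hs₀ : 0 < s) (hs₁ : s ≤ 1) (ht : t ≤ k) : lossRate s k t ≤ 1 / (k * s) := by
  rw [lossRate, ← div_div]
  gcongr
  · linarith
  · exact le_leftover hs₁ ht

theorem natCast_mul_div_three_le (hs₀ : 0 ≤ s) (ht : t ≤ k) : t * (s / (3 * k)) ≤ s / 3 := by
  have htk : (t : ℝ) / k ≤ 1 := div_le_one_of_le₀ (mod_cast ht) k.cast_nonneg
  calc t * (s / (3 * k)) = t / k * (s / 3) := by ring
    _ ≤ s / 3 := mul_le_of_le_one_left (by positivity) htk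

theorem sq_le_listRatio (hs₀ : 0 ≤ s) (hs₁ : s < 1) (ht : t ≤ k) : s ^ 2 ≤ listRatio s k t := by
  have hfactor : 1 - s ≤ (1 + s) * (1 - t * (s / (3 * k))) := by
    nlinarith [natCast_mul_div_three_le hs₀ ht]
  calc s ^ 2 ≤ leftover s k t ^ 2 * 1 := by
        rw [mul_one]
        exact pow_le_pow_left₀ hs₀ (le_leftover hs₁.le ht) 2
    _ ≤ leftover s k t ^ 2 * ((1 + s) * (1 - t * (s / (3 * k))) / (1 - s)) := by
        gcongr
        rwa [le_div_iff₀ (by linarith), one_mul]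
    _ = listRatio s k t := by rw [listRatio]; ring

theorem colourRatio_le (hs₀ : 0 < s) (hs₁ : s < 1) (ht : t < k) :
    colourRatio s k t ≤ lossRate s k t * listRatio s k t := by
  have hleft : 0 < leftover s k t := hs₀.trans_le (le_leftover hs₁.le ht.le)
  have hsub : 0 < 1 - s := sub_pos.2 hs₁
  have hsucc := natCast_mul_div_three_le hs₀.le (Nat.succ_le_of_lt ht)
  have hfactor : 1 + (t + 1) * (s / (3 * k)) ≤ (1 + s) * (1 - t * (s / (3 * k))) := by
    push_cast at hsucc
    nlinarith [natCast_mul_div_three_le hs₀.le ht.le]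
  calc colourRatio s k t ≤ leftover s k t / k * ((1 + s) * (1 - t * (s / (3 * k)))) := by
        rw [colourRatio]; gcongr
    _ = lossRate s k t * listRatio s k t := by rw [lossRate, listRatio]; field_simp

theorem errorRate_pos (hs₀ : 0 < s) (hk : 0 < k) : 0 < errorRate s k := by
  rw [errorRate]; positivity

theorem errorRate_le_div_sq (hs₀ : 0 ≤ s) (hs₁ : s ≤ 1) : errorRate s k ≤ s ^ 2 / (3 * k ^ 2) := by
  rw [errorRate]
  gcongr ?_ / _
  exact pow_le_pow_of_le_one hs₀ hs₁ (by norm_num)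

theorem errorRate_le_quarter (hs₀ : 0 ≤ s) (hs₁ : s ≤ 1) (hk : 2 ≤ k) : errorRate s k ≤ 1 / 4 := by
  have hk' : (2 : ℝ) ≤ k := mod_cast hk
  calc errorRate s k ≤ 1 / (3 * 2 ^ 2) := by
        rw [errorRate]; gcongr; exact pow_le_one₀ hs₀ hs₁
    _ ≤ 1 / 4 := by norm_num

theorem inv_add_errorRate_le_colourRatio (hs₀ : 0 ≤ s) (hs₁ : s ≤ 1) :
    (k : ℝ)⁻¹ + errorRate s k ≤ colourRatio s k 0 := by
  calc (k : ℝ)⁻¹ + errorRate s k ≤ (k : ℝ)⁻¹ + s / (3 * k ^ 2) := by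
        gcongr
        refine (errorRate_le_div_sq hs₀ hs₁).trans ?_
        gcongr
        exact pow_le_of_le_one hs₀ hs₁ two_ne_zero
    _ = colourRatio s k 0 := by rw [colourRatio, leftover]; push_cast; ring

theorem inv_add_errorRate_le (hs₀ : 0 ≤ s) (hs₁ : s ≤ 1) (hk : 0 < k) :
    (k : ℝ)⁻¹ + errorRate s k ≤ 2 / k := by
  have hk' : (1 : ℝ) ≤ k := mod_cast hk
  have herror : errorRate s k ≤ 1 / k := by
    rw [errorRate]
    gcongr
    · exact pow_le_one₀ hs₀ hs₁
    · nlinarith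
  calc (k : ℝ)⁻¹ + errorRate s k ≤ 1 / k + 1 / k := by rw [one_div]; gcongr; rwa [← one_div]
    _ = 2 / k := by ring

theorem listRatio_succ_le (hs₀ : 0 < s) (hs₁ : s < 1) (ht : t < k) :
    listRatio s k (t + 1) ≤ ((1 - lossRate s k t) ^ 2 - errorRate s k) * listRatio s k t := by
  have hk : 0 < k := by omega
  have hk₁ : (1 : ℝ) ≤ k := mod_cast hk
  have hleft : 0 < leftover s k t := hs₀.trans_le (le_leftover hs₁.le ht.le)
  have hsub : 0 < 1 - s := sub_pos.2 hs₁
  have hloss : (1 - t * (s / (3 * k))) * (errorRate s k * leftover s k t ^ 2) ≤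
      leftover s k (t + 1) ^ 2 * (s / (3 * k)) := calc
    _ ≤ errorRate s k * leftover s k t ^ 2 :=
      mul_le_of_le_one_left (mul_nonneg (errorRate_pos hs₀ hk).le (sq_nonneg _))
        (sub_le_self _ (by positivity))
    _ ≤ errorRate s k := mul_le_of_le_one_right (errorRate_pos hs₀ hk).le
      (pow_le_one₀ hleft.le (leftover_le_one hs₁.le))
    _ = s ^ 2 * (s / (3 * k)) / k := by rw [errorRate]; ring
    _ ≤ s ^ 2 * (s / (3 * k)) := div_le_self (by positivity) hk₁
    _ ≤ leftover s k (t + 1) ^ 2 * (s / (3 * k)) := by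
      gcongr
      exact le_leftover hs₁.le ht
  calc listRatio s k (t + 1) = (1 + s) / (1 - s) * ((1 - t * (s / (3 * k))) *
        leftover s k (t + 1) ^ 2 - leftover s k (t + 1) ^ 2 * (s / (3 * k))) := by
        rw [listRatio]; push_cast; ring
    _ ≤ (1 + s) / (1 - s) * ((1 - t * (s / (3 * k))) * leftover s k (t + 1) ^ 2 -
        (1 - t * (s / (3 * k))) * (errorRate s k * leftover s k t ^ 2)) := by gcongr
    _ = _ := by rw [one_sub_lossRate hleft.ne', listRatio]; field_simp

theorem colourRatio_succ_ge (hs₀ : 0 < s) (hs₁ : s < 1) (ht : t < k) :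
    (1 - lossRate s k t) * colourRatio s k t + errorRate s k ≤ colourRatio s k (t + 1) := by
  have hleft : leftover s k t ≠ 0 := (hs₀.trans_le (le_leftover hs₁.le ht.le)).ne'
  have herror : errorRate s k ≤ leftover s k (t + 1) * (s / (3 * k ^ 2)) := calc
    errorRate s k ≤ s * (s / (3 * k ^ 2)) :=
      (errorRate_le_div_sq hs₀.le hs₁.le).trans_eq (by ring)
    _ ≤ leftover s k (t + 1) * (s / (3 * k ^ 2)) := by
      gcongr
      exact le_leftover hs₁.le ht
  calc (1 - lossRate s k t) * colourRatio s k t + errorRate s k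
      = leftover s k (t + 1) / k * (1 + (t + 1) * (s / (3 * k))) + errorRate s k := by
        rw [one_sub_lossRate hleft, colourRatio]; field_simp
    _ ≤ leftover s k (t + 1) / k * (1 + (t + 1) * (s / (3 * k))) +
        leftover s k (t + 1) * (s / (3 * k ^ 2)) := by gcongr
    _ = colourRatio s k (t + 1) := by rw [colourRatio]; push_cast; ring

theorem deferredRatio_succ_ge (hs₀ : 0 < s) (hs₁ : s ≤ 1) (ht : t < k) :
    deferredRatio s k t + 2 * lossRate s k t * ((k : ℝ)⁻¹ + errorRate s k) + 2 * errorRate s k ≤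
      deferredRatio s k (t + 1) := by
  have hk : 0 < k := by omega
  calc _ ≤ deferredRatio s k t + 2 * (1 / (k * s)) * (2 / k) + 2 * errorRate s k := by
        gcongr
        · have := (errorRate_pos hs₀ hk).le
          positivity
        · exact lossRate_le hs₀ hs₁ ht.le
        · exact inv_add_errorRate_le hs₀.le hs₁ hk
    _ = deferredRatio s k (t + 1) := by
        rw [deferredRatio, deferredRatio]; push_cast; field_simp; ring

theorem two_mul_deferredRatio_lt (hs₀ : 0 < s) (hs₁ : s < 1) (hk : 16 ≤ k * s ^ 3) :
    2 * deferredRatio s k k < listRatio s k k := by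
  have hk₁ : (16 : ℝ) ≤ k :=
    hk.trans (mul_le_of_le_one_right k.cast_nonneg (pow_le_one₀ hs₀.le hs₁.le))
  have : (0 : ℝ) < k := by linarith
  have hconflict : 8 / (k * s) ≤ s ^ 2 / 2 := by
    rw [div_le_div_iff₀ (by positivity) two_pos]
    linarith
  have herror : 4 * (s / (3 * k)) < 1 / 2 := by
    rw [← mul_div_assoc, div_lt_div_iff₀ (by positivity) two_pos]
    linarith
  calc 2 * deferredRatio s k k = 8 / (k * s) + s ^ 2 * (4 * (s / (3 * k))) := by
        rw [deferredRatio, errorRate]; field_simp; ring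
    _ < s ^ 2 / 2 + s ^ 2 * (1 / 2) :=
        add_lt_add_of_le_of_lt hconflict (mul_lt_mul_of_pos_left herror (by positivity))
    _ = s ^ 2 := by ring
    _ ≤ listRatio s k k := sq_le_listRatio hs₀.le hs₁ le_rfl

theorem isNibbleSchedule (hs₀ : 0 < s) (hs₁ : s < 1) (hk : 16 ≤ k * s ^ 3) :
    IsNibbleSchedule k (s ^ 2) (errorRate s k) (listRatio s k) (colourRatio s k)
      (deferredRatio s k) (lossRate s k) := by
  have hks : 2 ≤ k * s := by
    calc (2 : ℝ) ≤ k * s ^ 3 := by linarith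
      _ ≤ k * s := by gcongr; exact pow_le_of_le_one hs₀.le hs₁.le three_ne_zero
  have hk₂ : 2 ≤ k :=
    Nat.cast_le.1 (hks.trans (mul_le_of_le_one_right k.cast_nonneg hs₁.le))
  have hhalf {t : ℕ} (ht : t < k) : lossRate s k t ≤ 1 / 2 :=
    (lossRate_le hs₀ hs₁.le ht.le).trans (one_div_le_one_div_of_le two_pos hks)
  have hquarter := errorRate_le_quarter hs₀.le hs₁.le hk₂
  exact {
    α_pos := by positivity
    α_le_one := pow_le_one₀ hs₀.le hs₁.le
    δ_pos := errorRate_pos hs₀ (by omega)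
    δ_le_one := by linarith
    le_a := fun t ht => sq_le_listRatio hs₀.le hs₁ ht.le
    b_zero := inv_add_errorRate_le_colourRatio hs₀.le hs₁.le
    φ_zero := by simp [deferredRatio]
    β_nonneg := fun t ht => lossRate_nonneg hs₀.le hs₁.le ht.le
    β_le_half := fun t ht => hhalf ht
    δ_le_sq := fun t ht => by nlinarith [hhalf ht]
    b_le := fun t ht => colourRatio_le hs₀ hs₁ ht
    a_succ := fun t ht => listRatio_succ_le hs₀ hs₁ ht
    b_succ := fun t ht => colourRatio_succ_ge hs₀ hs₁ ht
    φ_succ := fun t ht => deferredRatio_succ_ge hs₀ hs₁.le ht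
    φ_lt := two_mul_deferredRatio_lt hs₀ hs₁ hk }

theorem exists_isNibbleSchedule {ε : ℝ} (hε : 0 < ε) :
    ∃ (k : ℕ) (α δ : ℝ) (a b φ β : ℕ → ℝ),
      0 < k ∧ IsNibbleSchedule k α δ a b φ β ∧ a 0 = 1 + ε := by
  have hs₀ : 0 < ε / (2 + ε) := by positivity
  have hs₁ : ε / (2 + ε) < 1 := (div_lt_one (by positivity)).2 (by linarith)
  obtain ⟨k, hk⟩ := exists_nat_ge (16 / (ε / (2 + ε)) ^ 3)
  rw [div_le_iff₀ (by positivity)] at hk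
  have hk₀ : k ≠ 0 := by
    rintro rfl
    norm_num at hk
  refine ⟨k, _, _, _, _, _, _, Nat.pos_of_ne_zero hk₀, isNibbleSchedule hs₀ hs₁ hk, ?_⟩
  have hsub : 1 - ε / (2 + ε) = 2 / (2 + ε) := by field_simp; ring
  calc listRatio (ε / (2 + ε)) k 0 = (1 + ε / (2 + ε)) / (1 - ε / (2 + ε)) := by
        simp [listRatio, leftover]
    _ = 1 + ε := by rw [hsub]; field_simp; ring

end Schedule

/-! ### List edge colouring -/

theorem exists_forall_failureBound_le (k : ℕ) {α δ : ℝ} (hα : 0 < α) (hδ : 0 < δ) :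
    ∃ C : ℝ, ∀ (D : ℕ) (d : ℝ), 2 ≤ D → C * Real.log D ≤ d →
      4 * failureBound k D δ (α * d) * (D + 1) ^ 3 ≤ 1 := by
  obtain ⟨m, hm⟩ := pow_unbounded_of_one_lt (32 * (3 * k + 1) : ℝ) one_lt_two
  refine ⟨64 * (5 + m) / (δ ^ 2 * α), fun D d hD hd => ?_⟩
  have hD₂ : (2 : ℝ) ≤ D := mod_cast hD
  have hexponent : (5 + m : ℕ) * Real.log D ≤ δ ^ 2 * (α * d) / 64 := by
    rw [div_mul_eq_mul_div, div_le_iff₀ (by positivity)] at hd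
    push_cast
    linarith
  have hexp : Real.exp (-δ ^ 2 * (α * d) / 64) ≤ ((D : ℝ) ^ (5 + m))⁻¹ := by
    rw [← Real.exp_log (x := (D : ℝ)) (by linarith), ← Real.exp_nat_mul, ← Real.exp_neg,
      Real.exp_le_exp]
    linarith
  have hcount : (D + k * (D * (3 * D)) + 2 : ℝ) ≤ (3 * k + 1) * D ^ 2 := by nlinarith
  calc 4 * failureBound k D δ (α * d) * (D + 1) ^ 3
      ≤ 4 * ((3 * k + 1) * D ^ 2 * ((D : ℝ) ^ (5 + m))⁻¹) * (2 * D) ^ 3 := by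
        rw [failureBound]
        gcongr
        linarith
    _ = 32 * (3 * k + 1) * (D : ℝ) ^ 5 / D ^ (5 + m) := by ring
    _ ≤ D ^ m * (D : ℝ) ^ 5 / D ^ (5 + m) := by
        gcongr
        exact hm.le.trans (pow_le_pow_left₀ two_pos.le hD₂ m)
    _ = 1 := by rw [← pow_add, add_comm m, div_self (by positivity)]

theorem IsListEdgeColouringOn.comp_injective {V C C' : Type*} {S : Set (Sym2 V)}
    {L : Sym2 V → Finset C} {L' : Sym2 V → Finset C'} {γ : Sym2 V → C} {f : C → C'}
    (h : IsListEdgeColouringOn S L γ) (hf : Injective f) (hL : ∀ e ∈ S, ∀ c ∈ L e, f c ∈ L' e) :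
    IsListEdgeColouringOn S L' (f ∘ γ) :=
  ⟨fun e he => hL e he _ (h.1 e he), fun e he e' he' hne hmeet =>
    hf.ne (h.2 e he e' he' hne hmeet)⟩

universe u v

theorem exists_isListEdgeColouringOn_of_card_le {ε : ℝ} (hε : 0 < ε) :
    ∃ K : ℝ, ∀ (V : Type u) [Fintype V] (C : Type v) [Finite C] (G : SimpleGraph V)
      [DecidableRel G.Adj] (L : Sym2 V → Finset C), 2 ≤ G.maxDegree →
      K * Real.log G.maxDegree ≤ G.minDegree →
      (∀ e ∈ G.edgeSet, ∀ v ∈ e, (1 + ε) * G.degree v ≤ #(L e)) →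
      (∀ e ∈ G.edgeSet, #(L e) ≤ 3 * G.maxDegree) →
      ∃ γ, IsListEdgeColouringOn G.edgeSet L γ := by
  obtain ⟨k, α, δ, a, b, φ, β, hk, h, ha⟩ := exists_isNibbleSchedule hε
  obtain ⟨K, hK⟩ := exists_forall_failureBound_le k h.α_pos h.δ_pos
  refine ⟨K, fun V _ C _ G _ L hΔ hmin hL hLΔ => ?_⟩
  have : Nonempty C := by
    obtain ⟨e, he⟩ := G.edgeSet_nonempty.2 (mt G.maxDegree_eq_zero_iff.2 (by omega))
    induction e with | _ v x =>
    have hv := Sym2.mem_mk_left v x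
    have hpos : (0 : ℝ) < G.degree v := mod_cast degree_pos_of_mem_edge he hv
    have hcard : 0 < (#(L s(v, x)) : ℝ) := (mul_pos (by linarith) hpos).trans_le (hL _ he v hv)
    obtain ⟨c, -⟩ := card_pos.1 (Nat.cast_pos.1 hcard)
    exact ⟨c⟩
  exact h.exists_isListEdgeColouringOn hk G.degree_le_maxDegree (by omega) G.minDegree.cast_nonneg
    (fun v => mod_cast G.minDegree_le_degree v) (by rwa [ha]) hLΔ (hK _ _ hΔ hmin)

theorem exists_subset_card_le {V C : Type*} [Fintype V] {G : SimpleGraph V} [DecidableRel G.Adj]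
    {L : Sym2 V → Finset C} {ε : ℝ} (hε₀ : 0 ≤ ε) (hε₁ : ε ≤ 1)
    (hL : ∀ u v, G.Adj u v → (1 + ε) * max (G.degree u) (G.degree v) ≤ (#(L s(u, v)) : ℝ)) :
    ∃ T : Sym2 V → Finset C, (∀ e, T e ⊆ L e) ∧
      (∀ e ∈ G.edgeSet, ∀ v ∈ e, (1 + ε) * G.degree v ≤ #(T e)) ∧
      ∀ e, #(T e) ≤ 3 * G.maxDegree := by
  choose T hTL hT using fun e => exists_subset_card_eq (min_le_left #(L e) (3 * G.maxDegree))
  refine ⟨T, hTL, fun e he v hv => ?_, fun e => (hT e).trans_le (min_le_right _ _)⟩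
  obtain ⟨x, rfl⟩ := Sym2.mem_iff_exists.1 hv
  have hdeg : (G.degree v : ℝ) ≤ G.maxDegree := mod_cast G.degree_le_maxDegree v
  rw [hT, Nat.cast_min, le_min_iff]
  constructor
  · refine le_trans ?_ (hL v x he)
    gcongr
    exact le_max_left _ _
  · push_cast
    gcongr
    linarith

theorem stmt_0_general {ε : ℝ} (hε : 0 < ε) :
    ∃ K : ℝ, ∀ (V : Type u) [Fintype V] (C : Type v) (G : SimpleGraph V) [DecidableRel G.Adj]
      (L : Sym2 V → Finset C), 2 ≤ G.maxDegree → K * Real.log G.maxDegree ≤ G.minDegree →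
      (∀ u v, G.Adj u v → (1 + ε) * max (G.degree u) (G.degree v) ≤ (#(L s(u, v)) : ℝ)) →
      ∃ γ, IsListEdgeColouringOn G.edgeSet L γ := by
  classical
  have hε' : 0 < min ε 1 := lt_min hε one_pos
  obtain ⟨K, hK⟩ := exists_isListEdgeColouringOn_of_card_le.{u, v} hε'
  refine ⟨K, fun V _ C G _ L hΔ hmin hL => ?_⟩
  obtain ⟨T, hTL, hTdeg, hTΔ⟩ := exists_subset_card_le (C := C) hε'.le (min_le_right ε 1)
    fun u v huv => le_trans (by gcongr; exact min_le_left ε 1) (hL u v huv)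
  let P : Finset C := univ.biUnion T
  have hTP (e) : T e ⊆ P := subset_biUnion_of_mem T (mem_univ e)
  let T' (e : Sym2 V) : Finset P := (T e).subtype (· ∈ P)
  have hT' (e) : #(T' e) = #(T e) := by
    rw [card_subtype, filter_true_of_mem fun _ hc => hTP e hc]
  obtain ⟨γ, hγ⟩ := hK V P G T' hΔ hmin (by simpa only [hT'] using hTdeg)
    fun e _ => (hT' e).trans_le (hTΔ e)
  exact ⟨_, hγ.comp_injective Subtype.val_injective fun e _ c hc => hTL e (mem_subtype.1 hc)⟩

theorem eventually_mul_log_le_log_pow (K : ℝ) {m : ℕ} (hm : 2 ≤ m) :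
    ∀ᶠ n : ℕ in Filter.atTop, K * Real.log n ≤ Real.log n ^ m := by
  filter_upwards [(Real.tendsto_log_atTop.comp tendsto_natCast_atTop_atTop).eventually_ge_atTop
    (max K 1)] with n hn
  obtain ⟨hK, h₁⟩ := max_le_iff.1 hn
  simp only [comp_apply] at hK h₁
  calc K * Real.log n ≤ Real.log n ^ 2 := by rw [sq]; gcongr
    _ ≤ Real.log n ^ m := pow_le_pow_right₀ h₁ hm

theorem stmt_0 :
    ∀ ε : ℝ, 0 < ε →
    ∃ Δ₀ : ℕ, ∀ (V : Type) [Fintype V] [DecidableEq V]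
      (G : SimpleGraph V) [DecidableRel G.Adj] (L : Sym2 V → Finset ℕ),
      Δ₀ ≤ G.maxDegree →
      (Real.log G.maxDegree) ^ (25 : ℕ) ≤ (G.minDegree : ℝ) →
      (∀ u v : V, G.Adj u v →
        (1 + ε) * max (G.degree u) (G.degree v) ≤ ((L s(u, v)).card : ℝ)) →
      ∃ γ : Sym2 V → ℕ, IsLEdgeColouring G L γ := by
  intro ε hε
  obtain ⟨K, hK⟩ := stmt_0_general hε
  obtain ⟨Δ₀, hΔ₀⟩ := ((Filter.eventually_ge_atTop 2).and
    (eventually_mul_log_le_log_pow K (m := 25) (by norm_num))).exists_forall_of_atTop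
  exact ⟨Δ₀, fun V _ _ G _ L hΔ hδ =>
    hK V ℕ G L (hΔ₀ _ hΔ).1 ((hΔ₀ _ hΔ).2.trans hδ)⟩
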